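/- arXiv:math/0608591 — 5 statements merged into one kernel-verified Lean document; each statement's English description precedes it below -/
import Mathlib

section
/- Suppose 𝒜 = 𝒜₁ ⊎ 𝒜₂ with 𝒜₁ and 𝒜₂ nonempty, and let m be a positive integer. Then there exists a natural bijection between AM(𝒜₁ ⊎ 𝒜₂, m) and AM(𝒜₁, m) × AM(𝒜₂, m); namely, identifying Ch(𝒜₁ ⊎ 𝒜₂)^m with Ch(𝒜₁)^m × Ch(𝒜₂)^m via intersection of chambers, every admissible map Φ for 𝒜₁ ⊎ 𝒜₂ equals Φ₁ × Φ₂ for a unique pair of admissible maps Φ₁ for 𝒜₁ and Φ₂ for 𝒜₂, and conversely every such product is admissible. -/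
/-!
A chamber of a central arrangement is determined by its sign vector: each form has constant sign
on a chamber (connectedness), and the points with prescribed signs form a convex set
(`Arrangement.Ch.ext_eps`). Passing from `C ∩ D` to `C` or `D` does not change the signs
(`Arrangement.eps_eq_of_subset`). Hence, if `Φ` is admissible, the signs of `Φ (C ∩ D)` at the
hyperplanes of `𝒜₁` depend only on the signs of `C` there, so the `𝒜₁`-component of `Φ (C ∩ D)`
is a function of `C` alone, and likewise for `𝒜₂` and `D`; this splits `Φ` as a product.
Conversely the two families of sign functions of `Φ₁` and `Φ₂` glue to one for `Φ₁ × Φ₂`. The pair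
is unique because both sets of chambers are nonempty, a real vector space not being a finite union
of proper subspaces (`Arrangement.nonempty_ch`).
-/

noncomputable section
attribute [local instance] Classical.propDecidable

/-- A (nonempty if `ι` is nonempty) real central arrangement of hyperplanes in `ℝ^ℓ`,
given by a family of nonzero defining linear forms with pairwise distinct kernels
(the hyperplanes `H j = ker (form j)`). -/
structure Arrangement (ℓ : ℕ) (ι : Type) [Fintype ι] where
  form : ι → ((Fin ℓ → ℝ) →ₗ[ℝ] ℝ)
  form_ne_zero : ∀ j, form j ≠ 0
  ker_injective : ∀ j k, LinearMap.ker (form j) = LinearMap.ker (form k) → j = k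

namespace Arrangement

variable {ℓ : ℕ} {ι : Type} [Fintype ι]

/-- The complement `ℝ^ℓ ∖ (H₁ ∪ ⋯ ∪ Hₙ)`. -/
def Complement (A : Arrangement ℓ ι) : Set (Fin ℓ → ℝ) :=
  {x | ∀ j, A.form j x ≠ 0}

/-- A chamber is a connected component of the complement. -/
def IsChamber (A : Arrangement ℓ ι) (C : Set (Fin ℓ → ℝ)) : Prop :=
  ∃ x ∈ A.Complement, C = connectedComponentIn A.Complement x

/-- The set (type) of chambers of the arrangement. -/
abbrev Ch (A : Arrangement ℓ ι) : Type := {C : Set (Fin ℓ → ℝ) // A.IsChamber C}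

/-- `εⱼ^σ(C) = στ` when `C ⊆ Hⱼ^τ`; `B = {+,-}` is realized as `ℤˣ`, `+ = 1`, `- = -1`. -/
def eps (A : Arrangement ℓ ι) (j : ι) (σ : ℤˣ) (C : A.Ch) : ℤˣ :=
  σ * (if ∀ x ∈ C.1, 0 < A.form j x then 1 else -1)

/-- `Φ : Ch^m → Ch` is admissible if there is a family `φⱼ^σ : B^m → B` with
`φⱼ^σ(+,…,+) = +` and `εⱼ^σ ∘ Φ = φⱼ^σ ∘ εⱼ^σ` (componentwise) for all `j, σ`. -/
def IsAdmissible (A : Arrangement ℓ ι) (m : ℕ) (Φ : (Fin m → A.Ch) → A.Ch) : Prop :=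
  ∃ φ : ι → ℤˣ → ((Fin m → ℤˣ) → ℤˣ),
    (∀ j σ, φ j σ (fun _ => 1) = 1) ∧
    ∀ j σ 𝒞, A.eps j σ (Φ 𝒞) = φ j σ (fun i => A.eps j σ (𝒞 i))

/-- `r(ℬ) = codim (⋂_{H ∈ ℬ} H)` for the subarrangement indexed by `S`. -/
def rnkOn (A : Arrangement ℓ ι) (S : Finset ι) : ℕ :=
  ℓ - Module.finrank ℝ ↥(⨅ j ∈ S, LinearMap.ker (A.form j))

/-- `r(𝒜)`. -/
def rnk (A : Arrangement ℓ ι) : ℕ := A.rnkOn Finset.univ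

/-- The subarrangement indexed by `S` decomposes as a disjoint union of two nonempty
subarrangements with additive rank. -/
def DecomposableOn (A : Arrangement ℓ ι) (S : Finset ι) : Prop :=
  ∃ S₁ S₂ : Finset ι, S₁.Nonempty ∧ S₂.Nonempty ∧ Disjoint S₁ S₂ ∧ S₁ ∪ S₂ = S ∧
    A.rnkOn S = A.rnkOn S₁ + A.rnkOn S₂

def IndecomposableOn (A : Arrangement ℓ ι) (S : Finset ι) : Prop := ¬ A.DecomposableOn S

def Decomposable (A : Arrangement ℓ ι) : Prop := A.DecomposableOn Finset.univ

def Indecomposable (A : Arrangement ℓ ι) : Prop := ¬ A.Decomposable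

/-- The subarrangement of `A` consisting of the hyperplanes indexed by `S`. -/
def restrict (A : Arrangement ℓ ι) (S : Finset ι) : Arrangement ℓ {j : ι // j ∈ S} where
  form := fun j => A.form j.1
  form_ne_zero := fun j => A.form_ne_zero j.1
  ker_injective := fun j k h => Subtype.ext (A.ker_injective j.1 k.1 h)

/-- A dependent subarrangement: `r(ℬ) < |ℬ|`. -/
def DependentOn (A : Arrangement ℓ ι) (S : Finset ι) : Prop := A.rnkOn S < S.card

/-- A circuit: a minimally dependent subarrangement. -/
def IsCircuitOn (A : Arrangement ℓ ι) (S : Finset ι) : Prop :=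
  A.DependentOn S ∧ ∀ T ⊂ S, ¬ A.DependentOn T

end Arrangement

namespace Arrangement

variable {ℓ : ℕ} {ι : Type} [Fintype ι]

theorem nonempty_ch (A : Arrangement ℓ ι) : Nonempty A.Ch := by
  obtain ⟨x, hx⟩ : ∃ x, ∀ j, A.form j x ≠ 0 := by
    exact Module.Dual.exists_forall_ne_zero_of_forall_exists A.form fun j => by
      simpa using DFunLike.ne_iff.mp (A.form_ne_zero j)
  exact ⟨⟨_, x, hx, rfl⟩⟩

namespace Ch

variable {A : Arrangement ℓ ι}

theorem nonempty (C : A.Ch) : C.1.Nonempty := by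
  obtain ⟨_, x, hx, rfl⟩ := C
  exact ⟨x, mem_connectedComponentIn hx⟩

theorem eq_component (C : A.Ch) {y : Fin ℓ → ℝ} (hy : y ∈ C.1) :
    C.1 = connectedComponentIn A.Complement y := by
  obtain ⟨_, x, hx, rfl⟩ := C
  exact connectedComponentIn_eq hy

/-- A defining form positive at one point of a chamber is positive on all of it. -/
theorem pos_of_pos (C : A.Ch) (j : ι) {x y : Fin ℓ → ℝ} (hx : x ∈ C.1) (hy : y ∈ C.1)
    (h : 0 < A.form j x) : 0 < A.form j y := by
  have hpre : IsPreconnected C.1 := by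
    rw [C.eq_component hx]; exact isPreconnected_connectedComponentIn
  have hne : ∀ z ∈ C.1, A.form j z ≠ 0 := fun z hz => by
    rw [C.eq_component hx] at hz
    exact connectedComponentIn_subset _ _ hz j
  by_contra hneg
  obtain ⟨z, hz, hz0⟩ := hpre.intermediate_value hy hx
    (LinearMap.continuous_of_finiteDimensional (A.form j)).continuousOn ⟨not_lt.mp hneg, h.le⟩
  exact hne z hz hz0

theorem eps_eq (C : A.Ch) (j : ι) (σ : ℤˣ) {x : Fin ℓ → ℝ} (hx : x ∈ C.1) :
    A.eps j σ C = σ * (if 0 < A.form j x then 1 else -1) := by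
  unfold eps
  congr 1
  exact if_congr ⟨fun h => h x hx, fun h y hy => C.pos_of_pos j hx hy h⟩ rfl rfl

theorem mem_complement (C : A.Ch) {x : Fin ℓ → ℝ} (hx : x ∈ C.1) : x ∈ A.Complement := by
  rw [C.eq_component hx] at hx
  exact connectedComponentIn_subset _ _ hx

/-- Chambers are determined by their sign vectors: the segment joining points of two chambers
with the same signs avoids every hyperplane. -/
theorem ext_eps {C D : A.Ch} (h : ∀ j, A.eps j 1 C = A.eps j 1 D) : C = D := by
  obtain ⟨x, hx⟩ := C.nonempty
  obtain ⟨y, hy⟩ := D.nonempty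
  have hsub : segment ℝ x y ⊆ A.Complement := by
    rintro _ ⟨a, b, ha, hb, hab, rfl⟩ j
    have hj := h j
    rw [C.eps_eq j 1 hx, D.eps_eq j 1 hy, one_mul, one_mul] at hj
    have hx0 := C.mem_complement hx j
    have hy0 := D.mem_complement hy j
    rw [map_add, map_smul, map_smul, smul_eq_mul, smul_eq_mul]
    have hab' : 0 < a ∨ 0 < b := by
      by_contra! hcon
      linarith
    by_cases h1 : 0 < A.form j x <;> by_cases h2 : 0 < A.form j y
    · rcases hab' with h3 | h3 <;> positivity
    · simp [h1, h2] at hj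
    · simp [h1, h2] at hj
    · have h1' := lt_of_le_of_ne (not_lt.mp h1) hx0
      have h2' := lt_of_le_of_ne (not_lt.mp h2) hy0
      rcases hab' with h3 | h3
      · nlinarith [mul_neg_of_pos_of_neg h3 h1', mul_nonpos_of_nonneg_of_nonpos hb h2'.le]
      · nlinarith [mul_neg_of_pos_of_neg h3 h2', mul_nonpos_of_nonneg_of_nonpos ha h1'.le]
  have hyx : y ∈ connectedComponentIn A.Complement x :=
    (convex_segment x y).isPreconnected.subset_connectedComponentIn
      (left_mem_segment ℝ x y) hsub (right_mem_segment ℝ x y)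
  rw [← C.eq_component hx] at hyx
  exact Subtype.ext ((C.eq_component hyx).trans (D.eq_component hy).symm)

end Ch

theorem eps_eq_of_subset (A : Arrangement ℓ ι) (T : Finset ι) (C : (A.restrict T).Ch) (E : A.Ch)
    (h : E.1 ⊆ C.1) (j : {j : ι // j ∈ T}) (σ : ℤˣ) :
    A.eps j.1 σ E = (A.restrict T).eps j σ C := by
  obtain ⟨x, hx⟩ := E.nonempty
  rw [E.eps_eq j.1 σ hx, C.eps_eq j σ (h hx)]
  rfl

section Product

variable {A : Arrangement ℓ ι} {S T : Finset ι} {m : ℕ}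
  {e : (A.restrict S).Ch × (A.restrict T).Ch ≃ A.Ch}

theorem eps_fst (he : ∀ C D, (e (C, D)).1 = C.1 ∩ D.1) (p) (j : {j : ι // j ∈ S}) (σ : ℤˣ) :
    A.eps j.1 σ (e p) = (A.restrict S).eps j σ p.1 :=
  A.eps_eq_of_subset S _ _ (by rw [he p.1 p.2]; exact Set.inter_subset_left) j σ

theorem eps_snd (he : ∀ C D, (e (C, D)).1 = C.1 ∩ D.1) (p) (j : {j : ι // j ∈ T}) (σ : ℤˣ) :
    A.eps j.1 σ (e p) = (A.restrict T).eps j σ p.2 :=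
  A.eps_eq_of_subset T _ _ (by rw [he p.1 p.2]; exact Set.inter_subset_right) j σ

/-- An admissible map splits as a product. The factors are obtained by freezing the other
component at an arbitrary tuple of chambers, whose choice does not matter. -/
theorem exists_factors (he : ∀ C D, (e (C, D)).1 = C.1 ∩ D.1)
    {Φ : (Fin m → A.Ch) → A.Ch} (hΦ : A.IsAdmissible m Φ) :
    ∃ Φ₁ Φ₂, (A.restrict S).IsAdmissible m Φ₁ ∧ (A.restrict T).IsAdmissible m Φ₂ ∧
      ∀ 𝒞 𝒟, Φ (fun i => e (𝒞 i, 𝒟 i)) = e (Φ₁ 𝒞, Φ₂ 𝒟) := by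
  obtain ⟨φ, hφ1, hφ⟩ := hΦ
  obtain ⟨C₀⟩ := (A.restrict S).nonempty_ch
  obtain ⟨D₀⟩ := (A.restrict T).nonempty_ch
  have h1 : ∀ (𝒞 : Fin m → (A.restrict S).Ch) (𝒟 : Fin m → (A.restrict T).Ch)
      (j : {j : ι // j ∈ S}) σ,
      (A.restrict S).eps j σ (e.symm (Φ fun i => e (𝒞 i, 𝒟 i))).1 =
        φ j.1 σ (fun i => (A.restrict S).eps j σ (𝒞 i)) := fun 𝒞 𝒟 j σ => by
    rw [← eps_fst he, e.apply_symm_apply, hφ]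
    simp only [eps_fst he]
  have h2 : ∀ (𝒞 : Fin m → (A.restrict S).Ch) (𝒟 : Fin m → (A.restrict T).Ch)
      (j : {j : ι // j ∈ T}) σ,
      (A.restrict T).eps j σ (e.symm (Φ fun i => e (𝒞 i, 𝒟 i))).2 =
        φ j.1 σ (fun i => (A.restrict T).eps j σ (𝒟 i)) := fun 𝒞 𝒟 j σ => by
    rw [← eps_snd he, e.apply_symm_apply, hφ]
    simp only [eps_snd he]
  refine ⟨fun 𝒞 => (e.symm (Φ fun i => e (𝒞 i, D₀))).1,
    fun 𝒟 => (e.symm (Φ fun i => e (C₀, 𝒟 i))).2,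
    ⟨fun j => φ j.1, fun j => hφ1 j.1, fun j σ 𝒞 => h1 𝒞 (fun _ => D₀) j σ⟩,
    ⟨fun j => φ j.1, fun j => hφ1 j.1, fun j σ 𝒟 => h2 (fun _ => C₀) 𝒟 j σ⟩,
    fun 𝒞 𝒟 => ?_⟩
  rw [← e.symm_apply_eq]
  refine Prod.ext (Ch.ext_eps fun j => ?_) (Ch.ext_eps fun j => ?_)
  · rw [h1, h1 𝒞 (fun _ => D₀)]
  · rw [h2, h2 (fun _ => C₀) 𝒟]

theorem isAdmissible_of_factors (hST : ∀ j, j ∉ S → j ∈ T)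
    (he : ∀ C D, (e (C, D)).1 = C.1 ∩ D.1) {Φ : (Fin m → A.Ch) → A.Ch}
    {Φ₁ : (Fin m → (A.restrict S).Ch) → (A.restrict S).Ch}
    {Φ₂ : (Fin m → (A.restrict T).Ch) → (A.restrict T).Ch}
    (h₁ : (A.restrict S).IsAdmissible m Φ₁) (h₂ : (A.restrict T).IsAdmissible m Φ₂)
    (h : ∀ 𝒞 𝒟, Φ (fun i => e (𝒞 i, 𝒟 i)) = e (Φ₁ 𝒞, Φ₂ 𝒟)) : A.IsAdmissible m Φ := by
  obtain ⟨φ₁, h₁1, h₁⟩ := h₁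
  obtain ⟨φ₂, h₂1, h₂⟩ := h₂
  refine ⟨fun j => if hj : j ∈ S then φ₁ ⟨j, hj⟩ else φ₂ ⟨j, hST j hj⟩,
    fun j σ => ?_, fun j σ ℰ => ?_⟩
  · by_cases hj : j ∈ S
    · simpa [hj] using h₁1 ⟨j, hj⟩ σ
    · simpa [hj] using h₂1 ⟨j, hST j hj⟩ σ
  · obtain ⟨p, rfl⟩ : ∃ p : Fin m → _, ℰ = fun i => e (p i) :=
      ⟨fun i => e.symm (ℰ i), by simp⟩
    have hp := h (fun i => (p i).1) (fun i => (p i).2)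
    simp only [Prod.mk.eta] at hp
    rw [hp]
    by_cases hj : j ∈ S
    · simp only [hj, dif_pos]
      rw [eps_fst he _ ⟨j, hj⟩ σ, h₁]
      exact congrArg _ (funext fun i => (eps_fst he (p i) ⟨j, hj⟩ σ).symm)
    · simp only [hj, dif_neg, not_false_eq_true]
      rw [eps_snd he _ ⟨j, hST j hj⟩ σ, h₂]
      exact congrArg _ (funext fun i => (eps_snd he (p i) ⟨j, hST j hj⟩ σ).symm)

theorem factors_unique {Φ : (Fin m → A.Ch) → A.Ch}
    {Φ₁ Ψ₁ : (Fin m → (A.restrict S).Ch) → (A.restrict S).Ch}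
    {Φ₂ Ψ₂ : (Fin m → (A.restrict T).Ch) → (A.restrict T).Ch}
    (h : ∀ 𝒞 𝒟, Φ (fun i => e (𝒞 i, 𝒟 i)) = e (Φ₁ 𝒞, Φ₂ 𝒟))
    (h' : ∀ 𝒞 𝒟, Φ (fun i => e (𝒞 i, 𝒟 i)) = e (Ψ₁ 𝒞, Ψ₂ 𝒟)) : Φ₁ = Ψ₁ ∧ Φ₂ = Ψ₂ := by
  obtain ⟨C₀⟩ := (A.restrict S).nonempty_ch
  obtain ⟨D₀⟩ := (A.restrict T).nonempty_ch
  have key : ∀ 𝒞 𝒟, (Φ₁ 𝒞, Φ₂ 𝒟) = (Ψ₁ 𝒞, Ψ₂ 𝒟) := fun 𝒞 𝒟 =>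
    e.injective ((h 𝒞 𝒟).symm.trans (h' 𝒞 𝒟))
  exact ⟨funext fun 𝒞 => congrArg Prod.fst (key 𝒞 fun _ => D₀),
    funext fun 𝒟 => congrArg Prod.snd (key (fun _ => C₀) 𝒟)⟩

end Product

end Arrangement

/-- **Proposition.** If `𝒜 = 𝒜₁ ⊎ 𝒜₂` with `𝒜₁, 𝒜₂` nonempty, then
`AM(𝒜₁ ⊎ 𝒜₂, m)` is in natural bijection with `AM(𝒜₁, m) × AM(𝒜₂, m)`: identifying
`Ch(𝒜₁ ⊎ 𝒜₂)` with `Ch(𝒜₁) × Ch(𝒜₂)` via intersection of chambers (the equivalence `e`),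
a map `Φ` is admissible iff it equals `Φ₁ × Φ₂` for a unique pair of admissible maps
`Φ₁, Φ₂` for `𝒜₁, 𝒜₂`. -/
theorem am_product {ℓ : ℕ} {ι : Type} [Fintype ι] (A : Arrangement ℓ ι)
    (S : Finset ι) (hS : S.Nonempty) (hSc : Sᶜ.Nonempty)
    (hr : A.rnk = A.rnkOn S + A.rnkOn Sᶜ)
    (m : ℕ) (hm : 0 < m)
    (e : (A.restrict S).Ch × (A.restrict Sᶜ).Ch ≃ A.Ch)
    (he : ∀ (C : (A.restrict S).Ch) (D : (A.restrict Sᶜ).Ch), (e (C, D)).1 = C.1 ∩ D.1) :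
    Nonempty ({Φ : (Fin m → A.Ch) → A.Ch // A.IsAdmissible m Φ} ≃
        ({Φ₁ : (Fin m → (A.restrict S).Ch) → (A.restrict S).Ch //
            (A.restrict S).IsAdmissible m Φ₁} ×
         {Φ₂ : (Fin m → (A.restrict Sᶜ).Ch) → (A.restrict Sᶜ).Ch //
            (A.restrict Sᶜ).IsAdmissible m Φ₂})) ∧
    ∀ Φ : (Fin m → A.Ch) → A.Ch, A.IsAdmissible m Φ ↔
      ∃! ΦΦ : ((Fin m → (A.restrict S).Ch) → (A.restrict S).Ch) ×
              ((Fin m → (A.restrict Sᶜ).Ch) → (A.restrict Sᶜ).Ch),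
        (A.restrict S).IsAdmissible m ΦΦ.1 ∧ (A.restrict Sᶜ).IsAdmissible m ΦΦ.2 ∧
        ∀ (𝒞 : Fin m → (A.restrict S).Ch) (𝒟 : Fin m → (A.restrict Sᶜ).Ch),
          Φ (fun i => e (𝒞 i, 𝒟 i)) = e (ΦΦ.1 𝒞, ΦΦ.2 𝒟) := by
  have hST : ∀ j, j ∉ S → j ∈ Sᶜ := fun j hj => Finset.mem_compl.mpr hj
  refine ⟨⟨(Equiv.ofBijective (fun P => ⟨fun ℰ => e (P.1.1 fun i => (e.symm (ℰ i)).1,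
    P.2.1 fun i => (e.symm (ℰ i)).2), Arrangement.isAdmissible_of_factors hST he P.1.2 P.2.2
      (fun 𝒞 𝒟 => by simp)⟩) ⟨fun P Q hPQ => ?_, fun Φ => ?_⟩).symm⟩, fun Φ => ⟨fun hΦ => ?_, ?_⟩⟩
  · have hfun := congrArg Subtype.val hPQ
    obtain ⟨h1, h2⟩ := Arrangement.factors_unique (e := e) (Φ₁ := P.1.1) (Φ₂ := P.2.1)
      (Ψ₁ := Q.1.1) (Ψ₂ := Q.2.1)
      (Φ := fun ℰ => e (P.1.1 fun i => (e.symm (ℰ i)).1, P.2.1 fun i => (e.symm (ℰ i)).2))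
      (fun 𝒞 𝒟 => by simp)
      (fun 𝒞 𝒟 => by simpa using congrFun hfun fun i => e (𝒞 i, 𝒟 i))
    exact Prod.ext (Subtype.ext h1) (Subtype.ext h2)
  · obtain ⟨Φ₁, Φ₂, h1, h2, h⟩ := Arrangement.exists_factors he Φ.2
    refine ⟨(⟨Φ₁, h1⟩, ⟨Φ₂, h2⟩), Subtype.ext (funext fun ℰ => ?_)⟩
    simpa using (h (fun i => (e.symm (ℰ i)).1) (fun i => (e.symm (ℰ i)).2)).symm
  · obtain ⟨Φ₁, Φ₂, h1, h2, h⟩ := Arrangement.exists_factors he hΦ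
    refine ⟨(Φ₁, Φ₂), ⟨h1, h2, h⟩, fun Ψ hΨ => ?_⟩
    obtain ⟨e1, e2⟩ := Arrangement.factors_unique hΨ.2.2 h
    exact Prod.ext e1 e2
  · rintro ⟨P, ⟨h1, h2, h⟩, -⟩
    exact Arrangement.isAdmissible_of_factors hST he h1 h2 h
end
end

section
/- Let 𝒜 be a real central arrangement consisting of a single hyperplane H₁ and let m be a positive integer. Then the number of admissible maps is |AM(𝒜, m)| = 2^{2^m − 2}. -/
/-!
The two chambers of a single hyperplane `ker f` are the open half spaces `{f > 0}` and `{f < 0}`: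
each is convex, hence connected, and a connected subset of `{f ≠ 0}` cannot meet both. So `ε₁^+`
is a bijection from the chambers onto `{+, -}` (`chamberEquiv`).

Because of this bijection every map `Φ : Ch^m → Ch` has unique candidates `φ₁^+` and `φ₁^-`, and
the compatibility condition is automatic. The normalization `φ₁^σ(+,…,+) = +` says that `Φ` fixes
the diagonal point at the chamber of sign `σ` (`isAdmissible_iff`). As `m > 0`, the two
diagonal points are distinct, so an admissible map is a map with two prescribed values and is free
at the other `2^m - 2` points of `Ch^m` (`card_two_values`).
-/

noncomputable section
attribute [local instance] Classical.propDecidable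

namespace Arrangement

variable {ℓ : ℕ}

theorem component_pos (A : Arrangement ℓ (Fin 1)) {x : Fin ℓ → ℝ} (hx : 0 < A.form 0 x) :
    connectedComponentIn A.Complement x = {y | 0 < A.form 0 y} := by
  have hc : Continuous (A.form 0) := (A.form 0).continuous_of_finiteDimensional
  have hxC : x ∈ A.Complement := fun j => by rw [Subsingleton.elim j 0]; exact hx.ne'
  apply subset_antisymm
  · refine isPreconnected_connectedComponentIn.subset_left_of_subset_union
      (u := {y | 0 < A.form 0 y}) (v := {y | A.form 0 y < 0})
      (isOpen_lt continuous_const hc) (isOpen_lt hc continuous_const) ?_ ?_ ?_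
    · exact Set.disjoint_left.2 fun y (h1 : 0 < A.form 0 y) (h2 : A.form 0 y < 0) => lt_asymm h1 h2
    · intro y hy
      have h : A.form 0 y ≠ 0 := connectedComponentIn_subset _ _ hy 0
      exact h.lt_or_gt.symm
    · exact ⟨x, mem_connectedComponentIn hxC, hx⟩
  · refine IsPreconnected.subset_connectedComponentIn ?_ hx ?_
    · exact (convex_halfSpace_gt (A.form 0).isLinear 0).isPreconnected
    · intro y (hy : 0 < A.form 0 y) j
      rw [Subsingleton.elim j 0]
      exact hy.ne'

theorem component_neg (A : Arrangement ℓ (Fin 1)) {x : Fin ℓ → ℝ} (hx : A.form 0 x < 0) :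
    connectedComponentIn A.Complement x = {y | A.form 0 y < 0} := by
  have hc : Continuous (A.form 0) := (A.form 0).continuous_of_finiteDimensional
  have hxC : x ∈ A.Complement := fun j => by rw [Subsingleton.elim j 0]; exact hx.ne
  apply subset_antisymm
  · refine isPreconnected_connectedComponentIn.subset_left_of_subset_union
      (u := {y | A.form 0 y < 0}) (v := {y | 0 < A.form 0 y})
      (isOpen_lt hc continuous_const) (isOpen_lt continuous_const hc) ?_ ?_ ?_
    · exact Set.disjoint_left.2 fun y (h1 : A.form 0 y < 0) (h2 : 0 < A.form 0 y) => lt_asymm h1 h2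
    · intro y hy
      have h : A.form 0 y ≠ 0 := connectedComponentIn_subset _ _ hy 0
      exact h.lt_or_gt
    · exact ⟨x, mem_connectedComponentIn hxC, hx⟩
  · refine IsPreconnected.subset_connectedComponentIn ?_ hx ?_
    · exact (convex_halfSpace_lt (A.form 0).isLinear 0).isPreconnected
    · intro y (hy : A.form 0 y < 0) j
      rw [Subsingleton.elim j 0]
      exact hy.ne

theorem exists_form_pos (A : Arrangement ℓ (Fin 1)) : ∃ x, 0 < A.form 0 x := by
  obtain ⟨x, hx⟩ := DFunLike.ne_iff.1 (A.form_ne_zero 0)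
  rcases lt_or_gt_of_ne hx with h | h
  · exact ⟨-x, by simpa using h⟩
  · exact ⟨x, h⟩

theorem eps_eq_mul (A : Arrangement ℓ (Fin 1)) (j : Fin 1) (σ : ℤˣ) (C : A.Ch) :
    A.eps j σ C = σ * A.eps 0 1 C := by
  rw [Subsingleton.elim j 0]
  simp [eps]

theorem chamber_cases (A : Arrangement ℓ (Fin 1)) (C : A.Ch) :
    (C.1 = {y | 0 < A.form 0 y} ∧ A.eps 0 1 C = 1) ∨
      (C.1 = {y | A.form 0 y < 0} ∧ A.eps 0 1 C = -1) := by
  obtain ⟨C, x, hx, rfl⟩ := C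
  rcases lt_or_gt_of_ne (hx 0) with h | h
  · right
    refine ⟨A.component_neg h, ?_⟩
    have : ¬ ∀ y ∈ connectedComponentIn A.Complement x, 0 < A.form 0 y :=
      fun H => lt_asymm h (H x (mem_connectedComponentIn hx))
    simp [eps, this]
  · left
    refine ⟨A.component_pos h, ?_⟩
    have : ∀ y ∈ connectedComponentIn A.Complement x, 0 < A.form 0 y := by
      rw [A.component_pos h]
      exact fun y hy => hy
    simp only [eps, one_mul]
    exact if_pos this

theorem eps_bijective (A : Arrangement ℓ (Fin 1)) : Function.Bijective (A.eps 0 1) := by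
  constructor
  · intro C D h
    rcases A.chamber_cases C with ⟨hC, eC⟩ | ⟨hC, eC⟩ <;>
      rcases A.chamber_cases D with ⟨hD, eD⟩ | ⟨hD, eD⟩
    · exact Subtype.ext (hC.trans hD.symm)
    · rw [eC, eD] at h
      exact absurd h (by decide)
    · rw [eC, eD] at h
      exact absurd h (by decide)
    · exact Subtype.ext (hC.trans hD.symm)
  · intro σ
    obtain ⟨x, hx⟩ := A.exists_form_pos
    have hn : A.form 0 (-x) < 0 := by simpa using hx
    rcases Int.units_eq_one_or σ with rfl | rfl
    · have hxC : x ∈ A.Complement := fun j => by rw [Subsingleton.elim j 0]; exact hx.ne'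
      refine ⟨⟨_, x, hxC, rfl⟩, ?_⟩
      rcases A.chamber_cases ⟨_, x, hxC, rfl⟩ with ⟨-, h⟩ | ⟨h, -⟩
      · exact h
      · have hm : x ∈ {y | A.form 0 y < 0} := h ▸ mem_connectedComponentIn hxC
        exact absurd hm (lt_asymm hx)
    · have hxC : -x ∈ A.Complement := fun j => by rw [Subsingleton.elim j 0]; exact hn.ne
      refine ⟨⟨_, -x, hxC, rfl⟩, ?_⟩
      rcases A.chamber_cases ⟨_, -x, hxC, rfl⟩ with ⟨h, -⟩ | ⟨-, h⟩
      · have hm : -x ∈ {y | 0 < A.form 0 y} := h ▸ mem_connectedComponentIn hxC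
        exact absurd hm (lt_asymm hn)
      · exact h

/-- The bijection `ε₁^+` between the chambers of a single hyperplane and the signs. -/
def chamberEquiv (A : Arrangement ℓ (Fin 1)) : A.Ch ≃ ℤˣ :=
  Equiv.ofBijective _ A.eps_bijective

theorem isAdmissible_iff (A : Arrangement ℓ (Fin 1)) (m : ℕ) (Φ : (Fin m → A.Ch) → A.Ch) :
    A.IsAdmissible m Φ ↔
      Φ (fun _ => A.chamberEquiv.symm 1) = A.chamberEquiv.symm 1 ∧
      Φ (fun _ => A.chamberEquiv.symm (-1)) = A.chamberEquiv.symm (-1) := by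
  have he : ∀ j σ C, A.eps j σ C = σ * A.chamberEquiv C := A.eps_eq_mul
  constructor
  · rintro ⟨φ, h1, h2⟩
    have key : ∀ σ : ℤˣ, Φ (fun _ => A.chamberEquiv.symm σ) = A.chamberEquiv.symm σ := by
      intro σ
      have h := h2 0 σ (fun _ => A.chamberEquiv.symm σ)
      -- A sign is its own inverse, so `ε₁^σ` sends the chamber of sign `σ` to `+`.
      simp only [he, Equiv.apply_symm_apply, Int.units_mul_self, h1] at h
      rw [Equiv.eq_symm_apply]
      exact (eq_inv_of_mul_eq_one_right h).trans (Int.units_inv_eq_self σ)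
    exact ⟨key 1, key (-1)⟩
  · rintro ⟨hp, hn⟩
    have key : ∀ σ : ℤˣ, Φ (fun _ => A.chamberEquiv.symm σ) = A.chamberEquiv.symm σ := by
      intro σ
      rcases Int.units_eq_one_or σ with rfl | rfl
      · exact hp
      · exact hn
    -- `φ^σ` is `Φ` conjugated by `ε^σ`, whose inverse is `τ ↦ e⁻¹ (σ τ)`.
    refine ⟨fun _ σ s => σ * A.chamberEquiv (Φ fun i => A.chamberEquiv.symm (σ * s i)), ?_, ?_⟩
    · intro j σ
      simp [key, Int.units_mul_self]
    · intro j σ 𝒞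
      simp [he, ← mul_assoc, Int.units_mul_self]

end Arrangement

theorem card_two_values {X Y : Type} [Finite X] [Finite Y] {a b : X} (hab : a ≠ b) (c d : Y) :
    Nat.card {g : X → Y // g a = c ∧ g b = d} = Nat.card Y ^ (Nat.card X - 2) := by
  have := Fintype.ofFinite X
  have := Fintype.ofFinite Y
  -- Such maps amount to arbitrary maps on the complement of `{a, b}`.
  let E : {g : X → Y // g a = c ∧ g b = d} ≃ ({x : X // x ∉ ({a, b} : Finset X)} → Y) :=
    { toFun := fun g x => g.1 x.1
      invFun := fun h => ⟨fun x => if hx : x ∉ ({a, b} : Finset X) then h ⟨x, hx⟩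
          else if x = a then c else d, by simp, by simp [hab.symm]⟩
      left_inv := by
        rintro ⟨g, hga, hgb⟩
        ext x
        by_cases hxa : x = a
        · simp [hxa, hga]
        · by_cases hxb : x = b
          · simp [hxb, hgb, hab.symm]
          · simp [hxa, hxb]
      right_inv := by
        intro h
        ext ⟨x, hx⟩
        exact dif_pos hx }
  rw [Nat.card_congr E, Nat.card_fun]
  congr 1
  rw [Nat.card_eq_fintype_card, Nat.card_eq_fintype_card, Fintype.card_subtype_compl,
    Fintype.card_coe, Finset.card_pair hab]

/-- **Lemma.** For an arrangement consisting of a single hyperplane,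
`|AM(𝒜, m)| = 2^{2^m − 2}`. -/
theorem card_am_single_hyperplane {ℓ : ℕ} (A : Arrangement ℓ (Fin 1)) (m : ℕ) (hm : 0 < m) :
    Nat.card {Φ : (Fin m → A.Ch) → A.Ch // A.IsAdmissible m Φ} = 2 ^ (2 ^ m - 2) := by
  have hCh : Nat.card A.Ch = 2 := by
    rw [Nat.card_congr A.chamberEquiv, Nat.card_eq_fintype_card]
    rfl
  have : Finite A.Ch := Finite.of_equiv _ A.chamberEquiv.symm
  have hne : (fun _ : Fin m => A.chamberEquiv.symm 1) ≠ fun _ => A.chamberEquiv.symm (-1) := by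
    intro h
    have h0 := A.chamberEquiv.symm.injective (congrFun h ⟨0, hm⟩)
    exact absurd h0 (by decide)
  rw [Nat.card_congr (Equiv.subtypeEquivRight (A.isAdmissible_iff m)), card_two_values hne,
    Nat.card_fun, hCh, Nat.card_eq_fintype_card, Fintype.card_fin]
end
end

section
/- (Arrow's impossibility theorem, arrangement form) Let ℓ ≥ 3 and let 𝒜 be the braid arrangement in ℝ^ℓ, i.e., 𝒜 = {H_{ij} : 1 ≤ i < j ≤ ℓ} with H_{ij} = ker(x_i − x_j), whose chambers correspond bijectively to permutations π of {1,…,ℓ} via the chamber {x : x_{π(1)} < x_{π(2)} < ⋯ < x_{π(ℓ)}}. Then for every positive integer m, every admissible map Φ : Ch^m → Ch is the projection onto the h-th component for some h ∈ {1,…,m}. -/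
/-!
A chamber of the braid arrangement is the same thing as a strict linear order on the coordinates:
the sign of `x i - x j` is constant on a chamber because a chamber is connected and avoids the
hyperplanes, and two chambers with the same signs coincide because the segment joining them stays
in the complement. An admissible map is therefore a social welfare function on strict orders that
satisfies independence of irrelevant alternatives and unanimity, and Arrow's theorem is proved for
these by the ultrafilter argument (`arrow_of_order_data`).

Call a set `S` of voters decisive for `(i, j)` if society ranks `i` above `j` whenever exactly the
voters of `S` do. Transitivity gives the one combinatorial step (`Decisive.trans`): if `S` is
decisive for `(i, j)` and `T` for `(j, k)`, then every `U` with `S ∩ T ⊆ U ⊆ S ∪ T` is decisive for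
`(i, k)`. Taking `S` or `T` to be everybody shows that decisiveness does not depend on the pair and
is upward closed; taking `U = S ∩ T` shows that it is closed under intersections. Since exactly one
of `S`, `Sᶜ` is decisive, the decisive sets form an ultrafilter on a finite set, which is principal;
its generator is the dictator.
-/

noncomputable section
attribute [local instance] Classical.propDecidable

/-! ### Arrow's theorem for abstract strict orders -/

section Abstract

variable {X V B : Type}

/-- `S` is decisive for `(i, j)`: some profile in which exactly the voters of `S` rank `i` above `j`
leads to society ranking `i` above `j`. Under independence of irrelevant alternatives this does not
depend on the profile. Here `P C i j` says that the ballot `C` ranks `i` above `j`. -/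
def Decisive (P : B → X → X → Prop) (F : (V → B) → B) (i j : X) (S : Set V) : Prop :=
  ∃ c : V → B, (∀ v, P (c v) i j ↔ v ∈ S) ∧ P (F c) i j

/-- What Arrow's argument uses about strict ballots `P` and an aggregation rule `F`:
the ballots are strict linear orders, no two alternatives exhaust `X`, every strict order of three
alternatives is realised, and `F` satisfies independence of irrelevant alternatives and unanimity. -/
structure OrderData (P : B → X → X → Prop) (F : (V → B) → B) : Prop where
  total : ∀ C i j, i ≠ j → (P C i j ↔ ¬ P C j i)
  trans : ∀ C i j k, P C i j → P C j k → P C i k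
  realise : ∀ i j k, i ≠ j → j ≠ k → i ≠ k → ∀ a b c : Prop, (a → b → c) → (c → a ∨ b) →
    ∃ C, (P C i j ↔ a) ∧ (P C j k ↔ b) ∧ (P C i k ↔ c)
  third : ∀ i j : X, ∃ k, k ≠ i ∧ k ≠ j
  iia : ∀ i j, i ≠ j → ∀ c d : V → B, (∀ v, P (c v) i j ↔ P (d v) i j) →
    (P (F c) i j ↔ P (F d) i j)
  unanimity : ∀ i j, i ≠ j → ∀ c : V → B, (∀ v, P (c v) i j) → P (F c) i j

variable {P : B → X → X → Prop} {F : (V → B) → B}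

theorem OrderData.pref_iff (h : OrderData P F) {i j : X} (hij : i ≠ j) (c : V → B) :
    P (F c) i j ↔ Decisive P F i j {v | P (c v) i j} := by
  constructor
  · intro hc
    exact ⟨c, fun v => Iff.rfl, hc⟩
  · rintro ⟨d, hd, hF⟩
    exact (h.iia i j hij d c hd).1 hF

theorem OrderData.exists_profile (h : OrderData P F) {i j k : X} (hij : i ≠ j) (hjk : j ≠ k)
    (hik : i ≠ k) (S T U : Set V) (h1 : S ∩ T ⊆ U) (h2 : U ⊆ S ∪ T) :
    ∃ c : V → B, (∀ v, P (c v) i j ↔ v ∈ S) ∧ (∀ v, P (c v) j k ↔ v ∈ T) ∧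
      (∀ v, P (c v) i k ↔ v ∈ U) := by
  choose c hc using fun v : V => h.realise i j k hij hjk hik (v ∈ S) (v ∈ T) (v ∈ U)
    (fun a b => h1 ⟨a, b⟩) (fun a => h2 a)
  exact ⟨c, fun v => (hc v).1, fun v => (hc v).2.1, fun v => (hc v).2.2⟩

theorem Decisive.pref (h : OrderData P F) {i j : X} (hij : i ≠ j) {S : Set V}
    (hS : Decisive P F i j S) {c : V → B} (hc : ∀ v, P (c v) i j ↔ v ∈ S) : P (F c) i j := by
  obtain ⟨d, hd, hF⟩ := hS
  exact (h.iia i j hij d c fun v => (hd v).trans (hc v).symm).1 hF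

theorem Decisive.trans (h : OrderData P F) {i j k : X} (hij : i ≠ j) (hjk : j ≠ k) (hik : i ≠ k)
    {S T U : Set V} (hS : Decisive P F i j S) (hT : Decisive P F j k T)
    (h1 : S ∩ T ⊆ U) (h2 : U ⊆ S ∪ T) : Decisive P F i k U := by
  obtain ⟨c, c1, c2, c3⟩ := h.exists_profile hij hjk hik S T U h1 h2
  exact ⟨c, c3, h.trans _ i j k (hS.pref h hij c1) (hT.pref h hjk c2)⟩

theorem OrderData.decisive_univ (h : OrderData P F) {i j : X} (hij : i ≠ j) :
    Decisive P F i j (Set.univ : Set V) := by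
  obtain ⟨k, hki, hkj⟩ := h.third i j
  obtain ⟨c, c1, -, -⟩ := h.exists_profile hij hkj.symm hki.symm
    (Set.univ : Set V) Set.univ Set.univ (by simp) (by simp)
  exact ⟨c, c1, h.unanimity i j hij c fun v => (c1 v).2 trivial⟩

theorem Decisive.right (h : OrderData P F) {i j k : X} (hij : i ≠ j) (hjk : j ≠ k) (hik : i ≠ k)
    {S U : Set V} (hS : Decisive P F i j S) (hSU : S ⊆ U) : Decisive P F i k U :=
  hS.trans h hij hjk hik (h.decisive_univ hjk) (by simpa using hSU) (by simp)

theorem Decisive.left (h : OrderData P F) {i j k : X} (hij : i ≠ j) (hjk : j ≠ k) (hik : i ≠ k)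
    {T U : Set V} (hT : Decisive P F j k T) (hTU : T ⊆ U) : Decisive P F i k U :=
  (h.decisive_univ hij).trans h hij hjk hik hT (by simpa using hTU) (by simp)

theorem Decisive.swap (h : OrderData P F) {i j : X} (hij : i ≠ j)
    {S U : Set V} (hS : Decisive P F i j S) (hSU : S ⊆ U) : Decisive P F j i U := by
  obtain ⟨k, hki, hkj⟩ := h.third i j
  -- `(i, j) → (i, k) → (j, k) → (j, i)`
  exact ((hS.right h hij hkj.symm hki.symm hSU).left h hij.symm hki.symm hkj.symm
    subset_rfl).right h hkj.symm hki hij.symm subset_rfl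

theorem Decisive.mono (h : OrderData P F) {i j : X} (hij : i ≠ j)
    {S U : Set V} (hS : Decisive P F i j S) (hSU : S ⊆ U) : Decisive P F i j U :=
  (hS.swap h hij hSU).swap h hij.symm subset_rfl

/-- Decisiveness does not depend on the pair of alternatives. -/
theorem Decisive.neutral (h : OrderData P F) {i j i' j' : X} (hij : i ≠ j) (hij' : i' ≠ j')
    {S : Set V} (hS : Decisive P F i j S) : Decisive P F i' j' S := by
  -- change the second alternative to `j'` (up to a swap when `i = j'`), then the first to `i'`
  by_cases h1 : i = j'
  · subst h1
    by_cases h2 : j = i'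
    · subst h2
      exact hS.swap h hij subset_rfl
    · exact (hS.swap h hij subset_rfl).left h (Ne.symm h2) hij.symm hij' subset_rfl
  · have h3 : Decisive P F i j' S := by
      by_cases h2 : j = j'
      · exact h2 ▸ hS
      · exact hS.right h hij h2 h1 subset_rfl
    by_cases h4 : i' = i
    · exact h4 ▸ h3
    · exact h3.left h h4 h1 hij' subset_rfl

theorem OrderData.decisive_inter (h : OrderData P F) {i j : X} (hij : i ≠ j) {S T : Set V}
    (hS : Decisive P F i j S) (hT : Decisive P F i j T) : Decisive P F i j (S ∩ T) := by
  obtain ⟨k, hki, hkj⟩ := h.third i j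
  exact Decisive.neutral h hki.symm hij
    (hS.trans h hij hkj.symm hki.symm (hT.neutral h hij hkj.symm) subset_rfl
      (Set.inter_subset_left.trans Set.subset_union_left))

theorem OrderData.decisive_compl (h : OrderData P F) {i j : X} (hij : i ≠ j) (S : Set V) :
    ¬ Decisive P F i j Sᶜ ↔ Decisive P F i j S := by
  obtain ⟨k, hki, hkj⟩ := h.third i j
  obtain ⟨c, c1, -, -⟩ := h.exists_profile hij hkj.symm hki.symm
    S Set.univ Set.univ (by simp) (by simp)
  have e1 : {v | P (c v) i j} = S := Set.ext c1
  have e2 : {v | P (c v) j i} = Sᶜ := by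
    ext v
    rw [Set.mem_compl_iff, ← c1 v, Set.mem_ofPred_eq, h.total _ j i hij.symm]
  have h1 := h.pref_iff hij c
  have h2 := h.pref_iff hij.symm c
  rw [e1] at h1
  rw [e2] at h2
  have h3 : Decisive P F j i Sᶜ ↔ Decisive P F i j Sᶜ :=
    ⟨fun d => d.neutral h hij.symm hij, fun d => d.neutral h hij hij.symm⟩
  rw [← h3, ← h2, ← h1, h.total _ i j hij]

/-- Arrow's theorem: there is a dictator. -/
theorem arrow_of_order_data [Finite V] [Nonempty X] (h : OrderData P F) :
    ∃ d : V, ∀ (c : V → B) (i j : X), i ≠ j → (P (F c) i j ↔ P (c d) i j) := by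
  obtain ⟨x⟩ := ‹Nonempty X›
  obtain ⟨y, hyx, -⟩ := h.third x x
  let G : Filter V :=
    { sets := {S | Decisive P F x y S}
      univ_sets := h.decisive_univ hyx.symm
      sets_of_superset := fun hS hST => Decisive.mono h hyx.symm hS hST
      inter_sets := fun hS hT => h.decisive_inter hyx.symm hS hT }
  let W : Ultrafilter V := Ultrafilter.ofComplNotMemIff G fun S => h.decisive_compl hyx.symm S
  obtain ⟨d, hd⟩ := Ultrafilter.eq_pure_of_finite W
  have key : ∀ S : Set V, Decisive P F x y S ↔ d ∈ S := by
    intro S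
    have : S ∈ W ↔ d ∈ S := by rw [hd]; exact Ultrafilter.mem_pure
    exact this
  refine ⟨d, fun c i j hij => ?_⟩
  rw [h.pref_iff hij c]
  constructor
  · intro hS
    exact (key _).1 (hS.neutral h hij hyx.symm)
  · intro hS
    exact ((key {v | P (c v) i j}).2 hS).neutral h hyx.symm hij

end Abstract

/-! ### Chambers of the braid arrangement as strict orders -/

namespace Arrangement

section Signs

variable {ℓ : ℕ} {ι : Type} [Fintype ι] (A : Arrangement ℓ ι)

theorem Ch.nonempty_s14 (C : A.Ch) : ∃ x, x ∈ C.1 := by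
  obtain ⟨C, x, hx, rfl⟩ := C
  exact ⟨x, mem_connectedComponentIn hx⟩

/-- A chosen point of a chamber. -/
def pt (C : A.Ch) : Fin ℓ → ℝ := (Ch.nonempty_s14 A C).choose

theorem pt_mem (C : A.Ch) : A.pt C ∈ C.1 := (Ch.nonempty_s14 A C).choose_spec

theorem Ch.subset (C : A.Ch) : C.1 ⊆ A.Complement := by
  obtain ⟨C, x, hx, rfl⟩ := C
  exact connectedComponentIn_subset _ _

theorem Ch.isPreconnected (C : A.Ch) : IsPreconnected C.1 := by
  obtain ⟨C, x, hx, rfl⟩ := C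
  exact isPreconnected_connectedComponentIn

theorem Ch.eq_component_s14 (C : A.Ch) {x : Fin ℓ → ℝ} (hx : x ∈ C.1) :
    C.1 = connectedComponentIn A.Complement x := by
  obtain ⟨C, y, hy, rfl⟩ := C
  exact connectedComponentIn_eq hx

theorem form_pos_of_mem (C : A.Ch) (j : ι) {x y : Fin ℓ → ℝ} (hx : x ∈ C.1) (hy : y ∈ C.1)
    (h : 0 < A.form j x) : 0 < A.form j y := by
  by_contra hn
  have hcont : Continuous (A.form j) := LinearMap.continuous_of_finiteDimensional _
  obtain ⟨z, hz, hz0⟩ := (Ch.isPreconnected A C).intermediate_value hy hx hcont.continuousOn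
    ⟨not_lt.1 hn, h.le⟩
  exact Ch.subset A C hz j hz0

theorem eps_eq (C : A.Ch) (j : ι) (σ : ℤˣ) {x : Fin ℓ → ℝ} (hx : x ∈ C.1) :
    A.eps j σ C = σ * (if 0 < A.form j x then 1 else -1) := by
  unfold eps
  congr 1
  refine if_congr ⟨fun h => h x hx, fun h y hy => A.form_pos_of_mem C j hx hy h⟩ rfl rfl

/-- A chamber is determined by its signs. -/
theorem Ch.ext_of_signs (C D : A.Ch)
    (h : ∀ j, 0 < A.form j (A.pt C) ↔ 0 < A.form j (A.pt D)) : C = D := by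
  apply Subtype.ext
  have hseg : segment ℝ (A.pt C) (A.pt D) ⊆ A.Complement := by
    rintro _ ⟨a, b, ha, hb, hab, rfl⟩ j
    rw [map_add, map_smul, map_smul, smul_eq_mul, smul_eq_mul]
    have hC := Ch.subset A C (A.pt_mem C) j
    have hD := Ch.subset A D (A.pt_mem D) j
    rcases lt_or_gt_of_ne hC with hC | hC
    · have hD' : A.form j (A.pt D) < 0 :=
        lt_of_le_of_ne (not_lt.1 fun hp => absurd ((h j).2 hp) hC.le.not_gt) hD
      rcases ha.eq_or_lt with rfl | ha
      · nlinarith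
      · nlinarith [mul_pos_of_neg_of_neg (neg_neg_of_pos ha) hC,
          mul_nonneg hb (neg_nonneg.2 hD'.le)]
    · have hD' := (h j).1 hC
      rcases ha.eq_or_lt with rfl | ha
      · nlinarith
      · nlinarith [mul_pos ha hC, mul_nonneg hb hD'.le]
  have hmem : A.pt D ∈ connectedComponentIn A.Complement (A.pt C) :=
    (convex_segment _ _).isPreconnected.subset_connectedComponentIn
      (left_mem_segment ℝ _ _) hseg (right_mem_segment ℝ _ _)
  rw [Ch.eq_component_s14 A C (A.pt_mem C), Ch.eq_component_s14 A D (A.pt_mem D)]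
  exact connectedComponentIn_eq hmem

end Signs

section Braid

variable {ℓ : ℕ} {A : Arrangement ℓ {p : Fin ℓ × Fin ℓ // p.1 < p.2}}

/-- `A` is the braid arrangement, with `x i - x j`, `i < j`, as defining forms. -/
def IsBraid (A : Arrangement ℓ {p : Fin ℓ × Fin ℓ // p.1 < p.2}) : Prop :=
  ∀ p, A.form p =
    (LinearMap.proj (R := ℝ) (φ := fun _ : Fin ℓ => ℝ) p.1.1) -
    (LinearMap.proj (R := ℝ) (φ := fun _ : Fin ℓ => ℝ) p.1.2)

/-- The strict order of a chamber of the braid arrangement: `j` lies below `i`. -/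
def Pref (C : A.Ch) (i j : Fin ℓ) : Prop := A.pt C j < A.pt C i

theorem form_pos_iff
    (hA : IsBraid A)
    (p : {p : Fin ℓ × Fin ℓ // p.1 < p.2}) (x : Fin ℓ → ℝ) :
    0 < A.form p x ↔ x p.1.2 < x p.1.1 := by
  rw [hA p]
  simp

theorem mem_complement_iff
    (hA : IsBraid A)
    (x : Fin ℓ → ℝ) : x ∈ A.Complement ↔ Function.Injective x := by
  constructor
  · intro h i j hij
    by_contra hne
    rcases lt_or_gt_of_ne hne with hlt | hlt
    · exact h ⟨(i, j), hlt⟩ (by rw [hA]; simp [hij])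
    · exact h ⟨(j, i), hlt⟩ (by rw [hA]; simp [hij])
  · intro h p
    rw [hA p]
    simpa [sub_eq_zero] using fun e => p.2.ne (h e)

theorem Pref.total
    (hA : IsBraid A)
    (C : A.Ch) (i j : Fin ℓ) (hij : i ≠ j) : Pref C i j ↔ ¬ Pref C j i := by
  have hinj := (mem_complement_iff hA _).1 (Ch.subset A C (A.pt_mem C))
  unfold Pref
  rw [not_lt]
  exact ⟨le_of_lt, fun h => lt_of_le_of_ne h (hinj.ne hij.symm)⟩

/-- Every vector with distinct coordinates lies in a chamber, whose order is that of the vector. -/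
theorem exists_chamber
    (hA : IsBraid A)
    (x : Fin ℓ → ℝ) (hx : Function.Injective x) :
    ∃ C : A.Ch, ∀ i j, i ≠ j → (Pref C i j ↔ x j < x i) := by
  have hxc := (mem_complement_iff hA x).2 hx
  let C : A.Ch := ⟨connectedComponentIn A.Complement x, x, hxc, rfl⟩
  have hxC : x ∈ C.1 := mem_connectedComponentIn hxc
  have hlt : ∀ i j, i < j → (Pref C i j ↔ x j < x i) := by
    intro i j hij
    have h1 := form_pos_iff hA ⟨(i, j), hij⟩ (A.pt C)
    have h2 := form_pos_iff hA ⟨(i, j), hij⟩ x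
    unfold Pref
    rw [← h1, ← h2]
    exact ⟨A.form_pos_of_mem C _ (A.pt_mem C) hxC, A.form_pos_of_mem C _ hxC (A.pt_mem C)⟩
  refine ⟨C, fun i j hij => ?_⟩
  rcases lt_or_gt_of_ne hij with h | h
  · exact hlt i j h
  · rw [Pref.total hA C i j hij, hlt j i h, not_lt]
    exact ⟨fun h => lt_of_le_of_ne h (hx.ne hij.symm), le_of_lt⟩

theorem exists_three_values (a b c : Prop) (h1 : a → b → c) (h2 : c → a ∨ b) :
    ∃ p q r : ℝ, 0 ≤ p ∧ 0 ≤ q ∧ 0 ≤ r ∧ p ≠ q ∧ q ≠ r ∧ p ≠ r ∧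
      (q < p ↔ a) ∧ (r < q ↔ b) ∧ (r < p ↔ c) := by
  by_cases ha : a <;> by_cases hb : b <;> by_cases hc : c <;> simp only [ha, hb, hc] at h1 h2 ⊢
  · exact ⟨2, 1, 0, by norm_num⟩
  · simp at h1
  · exact ⟨2, 0, 1, by norm_num⟩
  · exact ⟨1, 0, 2, by norm_num⟩
  · exact ⟨1, 2, 0, by norm_num⟩
  · exact ⟨0, 2, 1, by norm_num⟩
  · simp at h2
  · exact ⟨0, 1, 2, by norm_num⟩

theorem exists_chamber_three
    (hA : IsBraid A)
    (i j k : Fin ℓ) (hij : i ≠ j) (hjk : j ≠ k) (hik : i ≠ k) (a b c : Prop)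
    (h1 : a → b → c) (h2 : c → a ∨ b) :
    ∃ C : A.Ch, (Pref C i j ↔ a) ∧ (Pref C j k ↔ b) ∧ (Pref C i k ↔ c) := by
  obtain ⟨p, q, r, hp, hq, hr, hpq, hqr, hpr, e1, e2, e3⟩ := exists_three_values a b c h1 h2
  -- the three values are nonnegative, the remaining coordinates are distinct negative numbers
  let x : Fin ℓ → ℝ := fun t =>
    if t = i then p else if t = j then q else if t = k then r else -((t : ℕ) : ℝ) - 1
  have hneg : ∀ t : Fin ℓ, -((t : ℕ) : ℝ) - 1 < 0 := fun t => by
    have : (0 : ℝ) ≤ ((t : ℕ) : ℝ) := Nat.cast_nonneg _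
    linarith
  have hx : Function.Injective x := by
    intro s t hst
    have hs := hneg s
    have ht := hneg t
    simp only [x] at hst
    split_ifs at hst <;> first
      | (subst_vars; rfl)
      | exact absurd hst hpq
      | exact absurd hst.symm hpq
      | exact absurd hst hqr
      | exact absurd hst.symm hqr
      | exact absurd hst hpr
      | exact absurd hst.symm hpr
      | (exfalso; linarith)
      | skip
    have h3 : ((s : ℕ) : ℝ) = ((t : ℕ) : ℝ) := by linarith
    exact Fin.ext (by exact_mod_cast h3)
  have xi : x i = p := by simp [x]
  have xj : x j = q := by simp [x, hij.symm]
  have xk : x k = r := by simp [x, hik.symm, hjk.symm]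
  obtain ⟨C, hC⟩ := exists_chamber hA x hx
  refine ⟨C, ?_, ?_, ?_⟩
  · rw [hC i j hij, xi, xj, e1]
  · rw [hC j k hjk, xj, xk, e2]
  · rw [hC i k hik, xi, xk, e3]

/-- An admissible map satisfies independence of irrelevant alternatives and unanimity; unanimity
for the pairs `(i, j)` with `j < i` is the condition `φ_H^σ(+,…,+) = +` for `σ = -1`. -/
theorem orderData_of_admissible (hℓ : 3 ≤ ℓ)
    (hA : IsBraid A)
    {m : ℕ} {Φ : (Fin m → A.Ch) → A.Ch} (hΦ : A.IsAdmissible m Φ) :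
    OrderData (fun C : A.Ch => Pref C) Φ := by
  obtain ⟨φ, hφ1, hφ⟩ := hΦ
  have heps : ∀ (C : A.Ch) (i j : Fin ℓ) (hij : i < j) (σ : ℤˣ),
      A.eps ⟨(i, j), hij⟩ σ C = σ * (if Pref C i j then 1 else -1) := by
    intro C i j hij σ
    rw [A.eps_eq C _ σ (A.pt_mem C)]
    congr 1
    exact if_congr (form_pos_iff hA _ _) rfl rfl
  have heps1 : ∀ (C : A.Ch) (i j : Fin ℓ) (hij : i < j),
      A.eps ⟨(i, j), hij⟩ 1 C = 1 ↔ Pref C i j := by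
    intro C i j hij
    rw [heps]
    by_cases h : Pref C i j <;> simp [h]
  have heps2 : ∀ (C : A.Ch) (i j : Fin ℓ) (hij : i < j),
      A.eps ⟨(i, j), hij⟩ (-1) C = 1 ↔ Pref C j i := by
    intro C i j hij
    rw [heps, Pref.total hA C j i hij.ne']
    by_cases h : Pref C i j <;> simp [h]
  have hiia : ∀ i j : Fin ℓ, i < j → ∀ c d : Fin m → A.Ch,
      (∀ v, Pref (c v) i j ↔ Pref (d v) i j) → (Pref (Φ c) i j ↔ Pref (Φ d) i j) := by
    intro i j hij c d hcd
    rw [← heps1 _ _ _ hij, ← heps1 _ _ _ hij, hφ, hφ]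
    have : (fun v => A.eps ⟨(i, j), hij⟩ 1 (c v)) = fun v => A.eps ⟨(i, j), hij⟩ 1 (d v) := by
      funext v
      rw [heps, heps]
      congr 1
      exact if_congr (hcd v) rfl rfl
    rw [this]
  refine ⟨Pref.total hA, fun C i j k h1 h2 => lt_trans h2 h1, exists_chamber_three hA, ?_, ?_, ?_⟩
  · intro i j
    have hcard : ({i, j} : Finset (Fin ℓ)).card < (Finset.univ : Finset (Fin ℓ)).card := by
      have := Finset.card_le_two (a := i) (b := j)
      rw [Finset.card_univ, Fintype.card_fin]
      omega
    obtain ⟨k, -, hk⟩ := Finset.exists_mem_notMem_of_card_lt_card hcard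
    simp only [Finset.mem_insert, Finset.mem_singleton, not_or] at hk
    exact ⟨k, hk.1, hk.2⟩
  · intro i j hij c d hcd
    rcases lt_or_gt_of_ne hij with h | h
    · exact hiia i j h c d hcd
    · rw [Pref.total hA _ i j hij, Pref.total hA _ i j hij]
      refine not_congr (hiia j i h c d fun v => ?_)
      rw [Pref.total hA _ j i hij.symm, Pref.total hA _ j i hij.symm]
      exact not_congr (hcd v)
  · intro i j hij c hc
    rcases lt_or_gt_of_ne hij with h | h
    · refine (heps1 _ _ _ h).1 ?_
      rw [hφ, funext fun v => (heps1 (c v) i j h).2 (hc v), hφ1]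
    · refine (heps2 _ _ _ h).1 ?_
      rw [hφ, funext fun v => (heps2 (c v) j i h).2 (hc v), hφ1]

end Braid

end Arrangement

/-- **Arrow's impossibility theorem (arrangement form).** For the braid arrangement
`𝒜 = {ker (x_i − x_j) : 1 ≤ i < j ≤ ℓ}` in `ℝ^ℓ`, `ℓ ≥ 3`, every admissible map
`Φ : Ch^m → Ch` is the projection onto the `h`-th component for some `h`. -/
theorem arrow_impossibility (ℓ : ℕ) (hℓ : 3 ≤ ℓ)
    (A : Arrangement ℓ {p : Fin ℓ × Fin ℓ // p.1 < p.2})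
    (hA : ∀ p, A.form p =
      (LinearMap.proj (R := ℝ) (φ := fun _ : Fin ℓ => ℝ) p.1.1) -
      (LinearMap.proj (R := ℝ) (φ := fun _ : Fin ℓ => ℝ) p.1.2))
    (m : ℕ) (hm : 0 < m)
    (Φ : (Fin m → A.Ch) → A.Ch) (hΦ : A.IsAdmissible m Φ) :
    ∃ h : Fin m, Φ = fun 𝒞 => 𝒞 h := by
  have : Nonempty (Fin ℓ) := ⟨⟨0, by omega⟩⟩
  obtain ⟨d, hd⟩ := arrow_of_order_data (Arrangement.orderData_of_admissible hℓ hA hΦ)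
  refine ⟨d, funext fun c => Arrangement.Ch.ext_of_signs A _ _ fun p => ?_⟩
  rw [Arrangement.form_pos_iff hA, Arrangement.form_pos_iff hA]
  exact hd c p.1.1 p.1.2 p.2.ne
end
end

section
/- Let ℬ = {H₁,…,H_ν} be a circuit (viewed as a central arrangement) with 3 ≤ ν, and let σ ∈ B. Then there exists τ = (τ₁, τ₂, …, τ_ν) ∈ B^ν such that the image of δ_ℬ^σ : Ch(ℬ) → B^ν equals B^ν ∖ {τ, −τ}. -/
/-!
Evaluating all forms at a point gives a linear map `L : ℝ^ℓ → ℝ^ν`, and rank-nullity identifies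
`r(ℬ)` with the dimension of the image of `L`. Dependence of a circuit therefore puts the image of
`L` inside the kernel of some nonzero functional `y ↦ ∑ cⱼ yⱼ`, while independence of all proper
subarrangements says that any `ν - 1` coordinates of `L x` can be prescribed freely. Hence every
`cⱼ` is nonzero and the image of `L` is exactly the hyperplane `∑ cⱼ yⱼ = 0`
(`exists_relation_of_isCircuitOn`).

Linear forms have constant sign on a chamber, so the image of `δ` consists, up to the factor `σ`, of
the sign vectors of the points of `∑ cⱼ yⱼ = 0` with no zero coordinate. The sign vector of `c` and
its negative do not occur, since they make the sum positive, respectively negative. Any other sign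
vector gives terms `cⱼ yⱼ` of both signs, and these can be rescaled to cancel
(`exists_weights_sum_eq_zero`).
-/

noncomputable section
attribute [local instance] Classical.propDecidable

namespace Arrangement

variable {ℓ : ℕ} {ι : Type} [Fintype ι]

/-- Rank-nullity for the joint evaluation map: its image has dimension `r(ℬ)`. -/
lemma rnkOn_eq_finrank_range (A : Arrangement ℓ ι) (S : Finset ι) :
    A.rnkOn S =
      Module.finrank ℝ (LinearMap.range (LinearMap.pi fun j : S => A.form j)) := by
  have h := LinearMap.finrank_range_add_finrank_ker (LinearMap.pi fun j : S => A.form j)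
  rw [LinearMap.ker_pi, iInf_subtype, Module.finrank_fin_fun] at h
  dsimp only at h
  unfold rnkOn
  omega

lemma dependentOn_iff_not_surjective (A : Arrangement ℓ ι) (S : Finset ι) :
    A.DependentOn S ↔ ¬ Function.Surjective (LinearMap.pi fun j : S => A.form j) := by
  rw [DependentOn, rnkOn_eq_finrank_range, ← LinearMap.range_eq_top]
  have hS : Module.finrank ℝ (S → ℝ) = S.card := by simp
  constructor
  · intro h htop
    rw [htop, finrank_top, hS] at h
    exact lt_irrefl _ h
  · intro h
    have := Submodule.finrank_lt h
    rwa [hS] at this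

/-- The values of the forms of a circuit are exactly the solutions of a single linear equation all
of whose coefficients are nonzero. -/
lemma exists_relation_of_isCircuitOn (A : Arrangement ℓ ι) (hA : A.IsCircuitOn Finset.univ) :
    ∃ c : ι → ℝ, (∀ j, c j ≠ 0) ∧
      ∀ y : ι → ℝ, (∃ x, ∀ j, A.form j x = y j) ↔ ∑ j, c j * y j = 0 := by
  obtain ⟨hdep, hmin⟩ := hA
  -- All coordinates but one can be prescribed.
  have hpre : ∀ (i : ι) (y : ι → ℝ), ∃ x, ∀ j, j ≠ i → A.form j x = y j := by
    intro i y
    have h := hmin (Finset.univ.erase i) (Finset.erase_ssubset (Finset.mem_univ i))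
    rw [dependentOn_iff_not_surjective, not_not] at h
    obtain ⟨x, hx⟩ := h fun j => y j
    exact ⟨x, fun j hj => congrFun hx ⟨j, by simp [hj]⟩⟩
  have hlt : LinearMap.range (LinearMap.pi A.form) < ⊤ := by
    rw [lt_top_iff_ne_top, Ne, LinearMap.range_eq_top]
    rw [dependentOn_iff_not_surjective] at hdep
    intro hs
    refine hdep fun y => ?_
    obtain ⟨x, hx⟩ := hs fun j => y ⟨j, Finset.mem_univ j⟩
    exact ⟨x, funext fun j => congrFun hx j.1⟩
  obtain ⟨f, hf0, hf⟩ := Submodule.exists_le_ker_of_lt_top _ hlt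
  let c : ι → ℝ := fun j => f fun k => if j = k then 1 else 0
  have hfc : ∀ y, f y = ∑ j, c j * y j := by
    intro y
    rw [LinearMap.pi_apply_eq_sum_univ f y]
    exact Finset.sum_congr rfl fun j _ => by simp [c, mul_comm]
  have hrel : ∀ x, ∑ j, c j * A.form j x = 0 := by
    intro x
    have h : f (LinearMap.pi A.form x) = 0 := hf ⟨x, rfl⟩
    rwa [hfc] at h
  -- If `x` realizes `y` away from `i`, the two sides of the relation differ in the term `i` only.
  have hdiff : ∀ (i : ι) (y : ι → ℝ) (x : Fin ℓ → ℝ), (∀ j, j ≠ i → A.form j x = y j) →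
      ∑ j, c j * y j = c i * (y i - A.form i x) := by
    intro i y x hx
    have h : ∑ j, (c j * y j - c j * A.form j x) = c i * y i - c i * A.form i x :=
      Finset.sum_eq_single i (fun j _ hj => by rw [hx j hj, sub_self])
        (fun hi => absurd (Finset.mem_univ i) hi)
    rw [Finset.sum_sub_distrib, hrel, sub_zero] at h
    rw [h, mul_sub]
  have hc : ∀ j, c j ≠ 0 := by
    intro i hi
    refine hf0 (LinearMap.ext fun y => ?_)
    obtain ⟨x, hx⟩ := hpre i y
    rw [hfc, hdiff i y x hx, hi, zero_mul, LinearMap.zero_apply]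
  refine ⟨c, hc, fun y => ⟨?_, fun hy => ?_⟩⟩
  · rintro ⟨x, hx⟩
    simpa only [hx] using hrel x
  · obtain ⟨i⟩ : Nonempty ι := by
      by_contra hemp
      rw [not_nonempty_iff] at hemp
      exact hf0 (LinearMap.ext fun y => by rw [hfc]; simp)
    obtain ⟨x, hx⟩ := hpre i y
    rw [hdiff i y x hx] at hy
    refine ⟨x, fun j => ?_⟩
    by_cases hj : j = i
    · subst hj
      exact (sub_eq_zero.1 ((mul_eq_zero.1 hy).resolve_left (hc j))).symm
    · exact hx j hj

/-- The sign of a real number in `B = ℤˣ`; zero is given the sign `-1`. -/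
def sgn (r : ℝ) : ℤˣ := if 0 < r then 1 else -1

lemma sgn_mul {r s : ℝ} (hr : r ≠ 0) (hs : s ≠ 0) : sgn (r * s) = sgn r * sgn s := by
  unfold sgn
  rcases hr.lt_or_gt with h | h <;> rcases hs.lt_or_gt with h' | h'
  · simp [mul_pos_of_neg_of_neg h h', h.not_gt, h'.not_gt]
  · simp [(mul_neg_of_neg_of_pos h h').not_gt, h.not_gt, h']
  · simp [(mul_neg_of_pos_of_neg h h').not_gt, h, h'.not_gt]
  · simp [mul_pos h h', h, h']

lemma sgn_eq_one_iff {r : ℝ} : sgn r = 1 ↔ 0 < r := by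
  unfold sgn
  split_ifs with h <;> simp [h]

lemma sgn_eq_neg_one_iff {r : ℝ} : sgn r = -1 ↔ r ≤ 0 := by
  unfold sgn
  split_ifs with h
  · simpa using h
  · simpa using h

/-- A form does not vanish on the complement, so it has constant sign on a chamber, and `ε` can be
read off at any point of it. -/
lemma eps_eq_sgn (A : Arrangement ℓ ι) (j : ι) (σ : ℤˣ) (C : A.Ch) {x : Fin ℓ → ℝ}
    (hx : x ∈ C.1) : A.eps j σ C = σ * sgn (A.form j x) := by
  obtain ⟨C, z, hz, rfl⟩ := C
  have hpc : IsPreconnected (A.form j '' connectedComponentIn A.Complement z) :=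
    isPreconnected_connectedComponentIn.image _
      (A.form j).continuous_of_finiteDimensional.continuousOn
  have h0 : (0 : ℝ) ∉ A.form j '' connectedComponentIn A.Complement z := by
    rintro ⟨w, hw, hw0⟩
    exact connectedComponentIn_subset _ _ hw j hw0
  have hiff : (∀ w ∈ connectedComponentIn A.Complement z, 0 < A.form j w) ↔
      0 < A.form j x := by
    refine ⟨fun h => h x hx, fun h w hw => ?_⟩
    by_contra hle
    exact h0 (hpc.ordConnected.out ⟨w, hw, rfl⟩ ⟨x, hx, rfl⟩ ⟨not_lt.1 hle, h.le⟩)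
  simp only [eps, sgn, hiff]

/-- The image of `δ` is the set of sign vectors of the points of the complement. -/
lemma mem_range_delta_iff (A : Arrangement ℓ ι) (σ : ℤˣ) (s : ι → ℤˣ) :
    s ∈ Set.range (fun C : A.Ch => fun j => A.eps j σ C) ↔
      ∃ x ∈ A.Complement, ∀ j, s j = σ * sgn (A.form j x) := by
  constructor
  · rintro ⟨⟨C, x, hx, rfl⟩, rfl⟩
    exact ⟨x, hx, fun j => A.eps_eq_sgn j σ _ (mem_connectedComponentIn hx)⟩
  · rintro ⟨x, hx, hs⟩
    refine ⟨⟨_, x, hx, rfl⟩, funext fun j => ?_⟩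
    rw [hs]
    exact A.eps_eq_sgn j σ _ (mem_connectedComponentIn hx)

end Arrangement

/-- A sign vector taking both values is the sign vector of a family of reals with sum zero. -/
lemma exists_weights_sum_eq_zero {ι : Type} [Fintype ι] (t : ι → ℤˣ)
    (hpos : ∃ j, t j = 1) (hneg : ∃ j, t j = -1) :
    ∃ w : ι → ℝ, (∀ j, w j ≠ 0) ∧ (∀ j, Arrangement.sgn (w j) = t j) ∧ ∑ j, w j = 0 := by
  let P : Finset ι := Finset.univ.filter fun j => t j = 1
  let N : Finset ι := Finset.univ.filter fun j => ¬ t j = 1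
  have hP : (0 : ℝ) < P.card := by
    obtain ⟨j, hj⟩ := hpos
    exact_mod_cast Finset.card_pos.2 ⟨j, by simp [P, hj]⟩
  have hN : (0 : ℝ) < N.card := by
    obtain ⟨j, hj⟩ := hneg
    exact_mod_cast Finset.card_pos.2 ⟨j, by simp [N, hj]⟩
  refine ⟨fun j => if t j = 1 then (N.card : ℝ) else -(P.card : ℝ), fun j => ?_, fun j => ?_, ?_⟩
  · dsimp only
    split_ifs
    · exact hN.ne'
    · exact neg_ne_zero.2 hP.ne'
  · dsimp only
    split_ifs with h
    · rw [h, Arrangement.sgn_eq_one_iff]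
      exact hN
    · rw [(Int.units_eq_one_or (t j)).resolve_left h, Arrangement.sgn_eq_neg_one_iff]
      linarith
  · rw [Finset.sum_ite, Finset.sum_const, Finset.sum_const, nsmul_eq_mul, nsmul_eq_mul]
    change (P.card : ℝ) * N.card + N.card * -(P.card : ℝ) = 0
    ring

/-- **Lemma.** If `ℬ = {H₁,…,H_ν}` is a circuit with `ν ≥ 3` and `σ ∈ B`, then there is a
`τ ∈ B^ν` with `im δ_ℬ^σ = B^ν ∖ {τ, −τ}`, where `δ_ℬ^σ(C) = (ε₁^σ(C), …, ε_ν^σ(C))`. -/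
theorem image_delta_of_circuit (ℓ ν : ℕ) (hν : 3 ≤ ν) (A : Arrangement ℓ (Fin ν))
    (hcir : A.IsCircuitOn Finset.univ) (σ : ℤˣ) :
    ∃ τ : Fin ν → ℤˣ,
      Set.range (fun C : A.Ch => fun j => A.eps j σ C) =
        Set.univ \ {τ, -τ} := by
  obtain ⟨c, hc, hrel⟩ := A.exists_relation_of_isCircuitOn hcir
  have hne : (Finset.univ : Finset (Fin ν)).Nonempty := ⟨⟨0, by omega⟩, Finset.mem_univ _⟩
  refine ⟨fun j => σ * Arrangement.sgn (c j), Set.ext fun s => ?_⟩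
  rw [A.mem_range_delta_iff]
  simp only [Set.mem_sdiff, Set.mem_univ, true_and, Set.mem_insert_iff, Set.mem_singleton_iff]
  constructor
  · rintro ⟨x, hx, hs⟩
    have hsum : ∑ j, c j * A.form j x = 0 := (hrel _).1 ⟨x, fun j => rfl⟩
    rintro (h | h)
    · have hpos : ∀ j, 0 < c j * A.form j x := by
        intro j
        have h1 : Arrangement.sgn (A.form j x) = Arrangement.sgn (c j) :=
          mul_left_cancel ((hs j).symm.trans (congrFun h j))
        rw [← Arrangement.sgn_eq_one_iff, Arrangement.sgn_mul (hc j) (hx j), h1,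
          Int.units_mul_self]
      exact (Finset.sum_pos (fun j _ => hpos j) hne).ne' hsum
    · have hneg : ∀ j, c j * A.form j x < 0 := by
        intro j
        have h1 : Arrangement.sgn (A.form j x) = -Arrangement.sgn (c j) := by
          have h2 := (hs j).symm.trans (congrFun h j)
          rw [Pi.neg_apply, ← mul_neg] at h2
          exact mul_left_cancel h2
        refine lt_of_le_of_ne ?_ (mul_ne_zero (hc j) (hx j))
        rw [← Arrangement.sgn_eq_neg_one_iff, Arrangement.sgn_mul (hc j) (hx j), h1,
          mul_neg, Int.units_mul_self]
      exact (Finset.sum_neg (fun j _ => hneg j) hne).ne hsum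
  · intro hs
    rw [not_or] at hs
    -- `t j` is the sign the term `c j * y j` must have for `y` to have the sign vector `σ * s`.
    let t : Fin ν → ℤˣ := fun j => σ * s j * Arrangement.sgn (c j)
    have hst : ∀ j, s j = t j * (σ * Arrangement.sgn (c j)) := by
      intro j
      calc s j = (σ * σ) * s j * (Arrangement.sgn (c j) * Arrangement.sgn (c j)) := by
            simp only [Int.units_mul_self, one_mul, mul_one]
        _ = t j * (σ * Arrangement.sgn (c j)) := by
            simp only [t]
            ac_rfl
    have hpos : ∃ j, t j = 1 := by
      by_contra! h
      refine hs.2 (funext fun j => ?_)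
      rw [hst j, (Int.units_eq_one_or (t j)).resolve_left (h j), neg_one_mul, Pi.neg_apply]
    have hneg : ∃ j, t j = -1 := by
      by_contra! h
      refine hs.1 (funext fun j => ?_)
      rw [hst j, (Int.units_eq_one_or (t j)).resolve_right (h j), one_mul]
    obtain ⟨w, hw0, hwt, hw⟩ := exists_weights_sum_eq_zero t hpos hneg
    obtain ⟨x, hx⟩ := (hrel fun j => w j / c j).2 (by
      simpa only [mul_div_cancel₀ _ (hc _)] using hw)
    have hx0 : x ∈ A.Complement := fun j => by
      rw [hx j]
      exact div_ne_zero (hw0 j) (hc j)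
    refine ⟨x, hx0, fun j => ?_⟩
    have hwx : w j = A.form j x * c j := by rw [hx j, div_mul_cancel₀ _ (hc j)]
    rw [hst j, ← hwt j, hwx, Arrangement.sgn_mul (hx0 j) (hc j)]
    calc _ = σ * Arrangement.sgn (A.form j x) *
          (Arrangement.sgn (c j) * Arrangement.sgn (c j)) := by ac_rfl
      _ = _ := by rw [Int.units_mul_self, mul_one]
end
end

section
/- Let 𝒜 = {H₁,…,Hₙ} be an indecomposable real central arrangement with n = |𝒜| ≥ 3, m a positive integer, and Φ : Ch^m → Ch an admissible map with associated family φⱼ^σ (1 ≤ j ≤ n, σ ∈ B). Then the maps φⱼ^σ do not depend on j or on σ: φ_{j₁}^{σ₁} = φ_{j₂}^{σ₂} for all 1 ≤ j₁, j₂ ≤ n and all σ₁, σ₂ ∈ B. -/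
/-!
Consider a circuit of the arrangement, that is, a linear relation `∑ cᵢ αᵢ = 0` whose support `S`
is minimal, and put `gᵢ = φᵢ^{sgn cᵢ}` for `i ∈ S`. The sign vectors `(εᵢ^{sgn cᵢ}(C))_{i ∈ S}` of
chambers are exactly the nonconstant elements of `B^S` (`exists_chamber_of_signs`,
`eps_not_constant`). Fix `j ≠ k` in `S` and `x ∈ B^m`. Prescribing the row `x` at `j`, the row `-x`
at `k` and the constant row `ρ ∈ B` at the other indices of `S` gives only nonconstant columns, so
it is realised by an `m`-tuple of chambers. As every `gᵢ` fixes both constant rows, applying `Φ`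
shows that `gⱼ(x)` and `gₖ(-x)` are not both `ρ`; hence `gₖ(-x) = -gⱼ(x)` (`phi_circuit_neg`).
Since the hyperplanes are distinct, `S` has at least three elements, and going through a third
index gives that all `gᵢ` coincide and are odd. As `φᵢ^{-σ}(x) = -φᵢ^σ(-x)`, the map `φᵢ^σ` is the
same for all `i ∈ S` and `σ ∈ B` (`phi_circuit_const`).

Indecomposability provides circuits: for every partition of the index set into two nonempty parts,
the spans of the corresponding forms meet nontrivially (otherwise the ranks would add up), and a
support-minimal relation witnessing this is a circuit meeting both parts
(`exists_circuit_crossing`). Applied to `{j}` and its complement, this gives `φⱼ^+ = φⱼ^-`; applied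
to `{k | φₖ^+ = φⱼ^+}`, it shows that this set contains every index.
-/

noncomputable section
attribute [local instance] Classical.propDecidable

namespace Arrangement

variable {ℓ : ℕ} {ι : Type} [Fintype ι]

/-! ### Signs of chambers -/

/-- The sign of a real number as an element of `B`; the value at `0` is `-1`. -/
def unitSign (r : ℝ) : ℤˣ := if 0 < r then 1 else -1

lemma unitSign_of_pos {r : ℝ} (h : 0 < r) : unitSign r = 1 := if_pos h

lemma unitSign_of_neg {r : ℝ} (h : r < 0) : unitSign r = -1 := if_neg (not_lt.2 h.le)

lemma unitSign_mul {a b : ℝ} (ha : a ≠ 0) (hb : b ≠ 0) :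
    unitSign a * unitSign b = unitSign (a * b) := by
  rcases ha.lt_or_gt with ha | ha <;> rcases hb.lt_or_gt with hb | hb
  · rw [unitSign_of_neg ha, unitSign_of_neg hb, unitSign_of_pos (mul_pos_of_neg_of_neg ha hb)]
    rfl
  · rw [unitSign_of_neg ha, unitSign_of_pos hb, unitSign_of_neg (mul_neg_of_neg_of_pos ha hb)]
    rfl
  · rw [unitSign_of_pos ha, unitSign_of_neg hb, unitSign_of_neg (mul_neg_of_pos_of_neg ha hb)]
    rfl
  · rw [unitSign_of_pos ha, unitSign_of_pos hb, unitSign_of_pos (mul_pos ha hb)]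
    rfl

lemma continuous_form (A : Arrangement ℓ ι) (j : ι) : Continuous (A.form j) :=
  LinearMap.continuous_of_finiteDimensional _

/-- A form has no zero on a chamber, so by connectedness its sign there is the sign at any point. -/
lemma eps_eq_s18 (A : Arrangement ℓ ι) (j : ι) (σ : ℤˣ) {p : Fin ℓ → ℝ} (hp : p ∈ A.Complement)
    (C : A.Ch) (hC : C.1 = connectedComponentIn A.Complement p) :
    A.eps j σ C = σ * unitSign (A.form j p) := by
  have hpC : p ∈ C.1 := hC ▸ mem_connectedComponentIn hp
  have hpre : IsPreconnected C.1 := hC ▸ isPreconnected_connectedComponentIn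
  have hsub : C.1 ⊆ A.Complement := hC ▸ connectedComponentIn_subset _ _
  unfold eps unitSign
  congr 1
  by_cases h : 0 < A.form j p
  · rw [if_pos h, if_pos]
    intro y hy
    by_contra hle
    obtain ⟨z, hz, hz0⟩ := hpre.intermediate_value hy hpC (A.continuous_form j).continuousOn
      ⟨not_lt.1 hle, h.le⟩
    exact hsub hz j hz0
  · rw [if_neg h, if_neg fun h' => h (h' p hpC)]

lemma exists_chamber_of_mem (A : Arrangement ℓ ι) {p : Fin ℓ → ℝ} (hp : p ∈ A.Complement) :
    ∃ C : A.Ch, ∀ j σ, A.eps j σ C = σ * unitSign (A.form j p) :=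
  ⟨⟨_, p, hp, rfl⟩, fun j σ => A.eps_eq_s18 j σ hp _ rfl⟩

lemma exists_point_of_chamber (A : Arrangement ℓ ι) (C : A.Ch) :
    ∃ p ∈ A.Complement, ∀ j σ, A.eps j σ C = σ * unitSign (A.form j p) := by
  obtain ⟨p, hp, hC⟩ := C.2
  exact ⟨p, hp, fun j σ => A.eps_eq_s18 j σ hp C hC⟩

lemma exists_mem_complement (A : Arrangement ℓ ι) : ∃ z, z ∈ A.Complement := by
  refine Module.Dual.exists_forall_ne_zero_of_forall_exists A.form fun i => ?_
  by_contra! h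
  exact A.form_ne_zero i (LinearMap.ext h)

/-- Any point can be moved into the complement without changing the signs of the forms that do
not vanish at it. -/
lemma exists_perturb (A : Arrangement ℓ ι) (x : Fin ℓ → ℝ) :
    ∃ p ∈ A.Complement, ∀ j, A.form j x ≠ 0 →
      unitSign (A.form j p) = unitSign (A.form j x) := by
  obtain ⟨z, hz⟩ := A.exists_mem_complement
  have key : ∀ j, ∀ᶠ t : ℝ in nhdsWithin 0 (Set.Ioi 0), A.form j (x + t • z) ≠ 0 ∧
      (A.form j x ≠ 0 → unitSign (A.form j (x + t • z)) = unitSign (A.form j x)) := by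
    intro j
    have hlim : Filter.Tendsto (fun t : ℝ => A.form j (x + t • z)) (nhdsWithin 0 (Set.Ioi 0))
        (nhds (A.form j x)) := by
      have hc : Continuous fun t : ℝ => A.form j (x + t • z) :=
        (A.continuous_form j).comp (by fun_prop)
      simpa using (hc.tendsto 0).mono_left nhdsWithin_le_nhds
    rcases lt_trichotomy (A.form j x) 0 with h | h | h
    · filter_upwards [hlim.eventually (gt_mem_nhds h)] with t ht
      exact ⟨ht.ne, fun _ => by rw [unitSign_of_neg ht, unitSign_of_neg h]⟩
    · filter_upwards [self_mem_nhdsWithin] with t ht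
      refine ⟨?_, fun h' => absurd h h'⟩
      simpa [h] using ⟨ne_of_gt ht, hz j⟩
    · filter_upwards [hlim.eventually (lt_mem_nhds h)] with t ht
      exact ⟨ht.ne', fun _ => by rw [unitSign_of_pos ht, unitSign_of_pos h]⟩
  obtain ⟨t, ht⟩ := (Filter.eventually_all.2 key).exists
  exact ⟨x + t • z, fun j => (ht j).1, fun j => (ht j).2⟩

/-! ### Circuits -/

/-- `c` is the coefficient vector of a linear relation between the defining forms. -/
def IsRelation (A : Arrangement ℓ ι) (c : ι → ℝ) : Prop := ∑ i, c i • A.form i = 0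

/-- `c` is a relation such that every relation supported in the support of `c` is a multiple of
`c`; for `c ≠ 0` this says that the support of `c` is a circuit. -/
def IsCircuitRelation (A : Arrangement ℓ ι) (c : ι → ℝ) : Prop :=
  A.IsRelation c ∧ ∀ d, A.IsRelation d → (∀ i, c i = 0 → d i = 0) → ∃ t : ℝ, d = t • c

lemma sum_sub_smul (A : Arrangement ℓ ι) (S : Finset ι) (c d : ι → ℝ) (t : ℝ) :
    ∑ i ∈ S, (c - t • d) i • A.form i =
      ∑ i ∈ S, c i • A.form i - t • ∑ i ∈ S, d i • A.form i := by
  refine LinearMap.ext fun x => ?_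
  simp [sub_mul, Finset.sum_sub_distrib, Finset.mul_sum, mul_assoc]

lemma IsRelation.sub_smul {A : Arrangement ℓ ι} {c d : ι → ℝ} (hc : A.IsRelation c)
    (hd : A.IsRelation d) (t : ℝ) : A.IsRelation (c - t • d) := by
  unfold IsRelation at *
  rw [sum_sub_smul, hc, hd, smul_zero, sub_zero]

lemma IsRelation.apply {A : Arrangement ℓ ι} {c : ι → ℝ} (hc : A.IsRelation c)
    (x : Fin ℓ → ℝ) : ∑ i, c i * A.form i x = 0 := by
  simpa using congrArg (fun f => f x) hc

/-- The forms in the support of a circuit relation take any prescribed values that satisfy this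
one relation. -/
lemma IsCircuitRelation.exists_point {A : Arrangement ℓ ι} {c : ι → ℝ}
    (hc : A.IsCircuitRelation c) (y : ι → ℝ) (hy : ∑ i, c i * y i = 0) :
    ∃ x, ∀ i, c i ≠ 0 → A.form i x = y i := by
  let T : (Fin ℓ → ℝ) →ₗ[ℝ] (ι → ℝ) :=
    LinearMap.pi fun i => if c i = 0 then 0 else A.form i
  let y' : ι → ℝ := fun i => if c i = 0 then 0 else y i
  suffices h : y' ∈ LinearMap.range T by
    obtain ⟨x, hx⟩ := h
    refine ⟨x, fun i hi => ?_⟩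
    simpa [T, y', hi] using congrFun hx i
  by_contra hn
  -- The coefficients on `supp c` of a functional vanishing on the range of `T` form a relation.
  obtain ⟨f, hf, hker⟩ := Submodule.exists_le_ker_of_notMem hn
  have hfsum : ∀ v : ι → ℝ, f v = ∑ i, v i * f (Pi.single i 1) := fun v => by
    rw [LinearMap.pi_apply_eq_sum_univ f v]
    refine Finset.sum_congr rfl fun i _ => ?_
    rw [smul_eq_mul]
    congr 2
    ext j
    simp [Pi.single_apply, eq_comm]
  let d : ι → ℝ := fun i => if c i = 0 then 0 else f (Pi.single i 1)
  have hd : A.IsRelation d := by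
    refine LinearMap.ext fun x => ?_
    have h0 : f (T x) = 0 := hker ⟨x, rfl⟩
    rw [hfsum] at h0
    rw [LinearMap.zero_apply, ← h0, LinearMap.sum_apply]
    refine Finset.sum_congr rfl fun i _ => ?_
    by_cases hi : c i = 0 <;> simp [d, T, hi, mul_comm]
  obtain ⟨t, ht⟩ := hc.2 d hd fun i hi => by simp [d, hi]
  apply hf
  rw [hfsum]
  calc ∑ i, y' i * f (Pi.single i 1) = ∑ i, d i * y i :=
        Finset.sum_congr rfl fun i _ => by by_cases hi : c i = 0 <;> simp [d, y', hi, mul_comm]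
    _ = t * ∑ i, c i * y i := by
        rw [ht, Finset.mul_sum]
        exact Finset.sum_congr rfl fun i _ => by simp [mul_assoc]
    _ = 0 := by rw [hy, mul_zero]

/-- On a circuit, every nonconstant sign vector is realised by a chamber. -/
lemma exists_chamber_of_signs {A : Arrangement ℓ ι} {c : ι → ℝ} (hc : A.IsCircuitRelation c)
    (e : ι → ℤˣ) {j k : ι} (hj : c j ≠ 0) (hk : c k ≠ 0) (hej : e j = 1) (hek : e k = -1) :
    ∃ C : A.Ch, ∀ i, c i ≠ 0 → A.eps i (unitSign (c i)) C = e i := by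
  let P : Finset ι := Finset.univ.filter fun i => c i ≠ 0 ∧ e i = 1
  let N : Finset ι := Finset.univ.filter fun i => c i ≠ 0 ∧ e i = -1
  have hP : (0 : ℝ) < P.card := by
    exact_mod_cast Finset.card_pos.2 ⟨j, by simp [P, hj, hej]⟩
  have hN : (0 : ℝ) < N.card := by
    exact_mod_cast Finset.card_pos.2 ⟨k, by simp [N, hk, hek]⟩
  -- Weight `|N|` on the positive and `-|P|` on the negative indices: the total weight is `0`.
  let w : ι → ℝ := fun i => (if c i ≠ 0 ∧ e i = 1 then (N.card : ℝ) else 0) -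
    (if c i ≠ 0 ∧ e i = -1 then (P.card : ℝ) else 0)
  have hwsum : ∑ i, w i = 0 := by
    simp only [w, Finset.sum_sub_distrib, ← Finset.sum_filter, Finset.sum_const, nsmul_eq_mul]
    change (P.card : ℝ) * N.card - N.card * P.card = 0
    ring
  have hne : (-1 : ℤˣ) ≠ 1 := by decide
  have hwsign : ∀ i, c i ≠ 0 → w i ≠ 0 ∧ unitSign (w i) = e i := by
    intro i hi
    rcases Int.units_eq_one_or (e i) with h | h
    · have hw : w i = N.card := by simp [w, hi, h, hne.symm]
      rw [hw, h]
      exact ⟨hN.ne', unitSign_of_pos hN⟩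
    · have hw : w i = -P.card := by simp [w, hi, h, hne]
      rw [hw, h]
      exact ⟨neg_ne_zero.2 hP.ne', unitSign_of_neg (neg_neg_of_pos hP)⟩
  obtain ⟨x, hx⟩ := hc.exists_point (fun i => w i / c i) (by
    rw [← hwsum]
    refine Finset.sum_congr rfl fun i _ => ?_
    by_cases hi : c i = 0
    · simp [w, hi]
    · field_simp)
  obtain ⟨p, hp, hpx⟩ := A.exists_perturb x
  obtain ⟨C, hC⟩ := A.exists_chamber_of_mem hp
  refine ⟨C, fun i hi => ?_⟩
  have hxi : A.form i x ≠ 0 := by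
    rw [hx i hi]
    exact div_ne_zero (hwsign i hi).1 hi
  rw [hC, hpx i hxi, unitSign_mul hi hxi, hx i hi, mul_div_cancel₀ _ hi]
  exact (hwsign i hi).2

/-- The sign vector of a chamber is never constant on the support of a relation. -/
lemma eps_not_constant {A : Arrangement ℓ ι} {c : ι → ℝ} (hc : A.IsRelation c) {j : ι}
    (hj : c j ≠ 0) (C : A.Ch) (ρ : ℤˣ) :
    ¬ ∀ i, c i ≠ 0 → A.eps i (unitSign (c i)) C = ρ := by
  intro h
  obtain ⟨p, hp, hC⟩ := A.exists_point_of_chamber C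
  have hprod : ∀ i, c i ≠ 0 → unitSign (c i * A.form i p) = ρ := fun i hi => by
    rw [← unitSign_mul hi (hp i), ← hC, h i hi]
  have hne : (-1 : ℤˣ) ≠ 1 := by decide
  rcases Int.units_eq_one_or ρ with rfl | rfl
  · have hpos : ∀ i, c i ≠ 0 → 0 < c i * A.form i p := fun i hi => by
      refine (mul_ne_zero hi (hp i)).lt_or_gt.resolve_left fun hlt => hne ?_
      exact (unitSign_of_neg hlt).symm.trans (hprod i hi)
    refine (Finset.sum_pos' (fun i _ => ?_) ⟨j, Finset.mem_univ j, hpos j hj⟩).ne' (hc.apply p)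
    by_cases hi : c i = 0
    · simp [hi]
    · exact (hpos i hi).le
  · have hneg : ∀ i, c i ≠ 0 → c i * A.form i p < 0 := fun i hi => by
      refine (mul_ne_zero hi (hp i)).lt_or_gt.resolve_right fun hgt => hne ?_
      exact (hprod i hi).symm.trans (unitSign_of_pos hgt)
    refine (Finset.sum_neg' (fun i _ => ?_) ⟨j, Finset.mem_univ j, hneg j hj⟩).ne (hc.apply p)
    by_cases hi : c i = 0
    · simp [hi]
    · exact (hneg i hi).le

/-- Distinct hyperplanes have non-proportional forms, so a circuit has at least three elements. -/
lemma IsRelation.exists_third {A : Arrangement ℓ ι} {c : ι → ℝ} (hc : A.IsRelation c)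
    {j k : ι} (hjk : j ≠ k) (hj : c j ≠ 0) (hk : c k ≠ 0) :
    ∃ l, c l ≠ 0 ∧ l ≠ j ∧ l ≠ k := by
  by_contra! h
  refine hjk (A.ker_injective j k ?_)
  have hsum : ∀ x, c j * A.form j x + c k * A.form k x = 0 := fun x => by
    rw [← hc.apply x, ← Finset.sum_pair (f := fun i => c i * A.form i x) hjk]
    refine Finset.sum_subset (Finset.subset_univ _) fun i _ hi => ?_
    have hi0 : c i = 0 := by
      by_contra hi0
      simp only [Finset.mem_insert, Finset.mem_singleton, not_or] at hi
      exact hi.2 (h i hi0 hi.1)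
    rw [hi0, zero_mul]
  ext x
  have hx := hsum x
  rw [LinearMap.mem_ker, LinearMap.mem_ker]
  constructor <;> intro h0 <;> rw [h0] at hx <;> simpa [hj, hk] using hx

/-! ### The maps `φ` on a circuit -/

section Admissible

variable {A : Arrangement ℓ ι} {m : ℕ} {Φ : (Fin m → A.Ch) → A.Ch}
  {φ : ι → ℤˣ → (Fin m → ℤˣ) → ℤˣ}

lemma eps_surjective (A : Arrangement ℓ ι) (j : ι) (σ τ : ℤˣ) : ∃ C : A.Ch, A.eps j σ C = τ := by
  obtain ⟨z, hz⟩ := A.exists_mem_complement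
  have hnz : -z ∈ A.Complement := fun i => by simpa using hz i
  obtain ⟨C, hC⟩ := A.exists_chamber_of_mem hz
  obtain ⟨D, hD⟩ := A.exists_chamber_of_mem hnz
  have hCD : A.eps j σ D = -A.eps j σ C := by
    rw [hC, hD, map_neg]
    rcases (hz j).lt_or_gt with h | h
    · rw [unitSign_of_neg h, unitSign_of_pos (neg_pos.2 h)]
      simp
    · rw [unitSign_of_pos h, unitSign_of_neg (neg_neg_of_pos h)]
      simp
  rcases Int.units_eq_one_or (A.eps j σ C) with h | h <;>
    rcases Int.units_eq_one_or τ with rfl | rfl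
  · exact ⟨C, h⟩
  · exact ⟨D, by rw [hCD, h]⟩
  · exact ⟨D, by rw [hCD, h, neg_neg]⟩
  · exact ⟨C, h⟩

lemma eps_neg (A : Arrangement ℓ ι) (j : ι) (σ : ℤˣ) (C : A.Ch) :
    A.eps j (-σ) C = -A.eps j σ C := neg_mul _ _

lemma phi_neg_sign
    (hcomm : ∀ j σ 𝒞, A.eps j σ (Φ 𝒞) = φ j σ (fun i => A.eps j σ (𝒞 i)))
    (j : ι) (σ : ℤˣ) (x : Fin m → ℤˣ) : φ j (-σ) x = -φ j σ (-x) := by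
  choose 𝒞 h𝒞 using fun i => A.eps_surjective j (-σ) (x i)
  have h1 := hcomm j (-σ) 𝒞
  have h2 := hcomm j σ 𝒞
  have hx : (fun i => A.eps j σ (𝒞 i)) = -x := by
    funext i
    rw [Pi.neg_apply, ← h𝒞 i, eps_neg, neg_neg]
  simp only [h𝒞] at h1
  rw [← h1, eps_neg, h2, hx]

lemma phi_const (hunit : ∀ j σ, φ j σ (fun _ => 1) = 1)
    (hcomm : ∀ j σ 𝒞, A.eps j σ (Φ 𝒞) = φ j σ (fun i => A.eps j σ (𝒞 i)))
    (j : ι) (σ ρ : ℤˣ) : φ j σ (fun _ => ρ) = ρ := by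
  rcases Int.units_eq_one_or ρ with rfl | rfl
  · exact hunit j σ
  · have h := phi_neg_sign hcomm j (-σ) (fun _ => -1)
    have hx : -(fun _ => -1 : Fin m → ℤˣ) = fun _ => 1 := by
      funext i
      simp
    rw [neg_neg, hx, hunit] at h
    exact h

/-- Rows `x` at `j`, `-x` at `k` and constant `ρ` elsewhere are realised by chambers, so the two
values of `φ` cannot both be `ρ`, for either `ρ`. -/
lemma phi_circuit_neg (hunit : ∀ j σ, φ j σ (fun _ => 1) = 1)
    (hcomm : ∀ j σ 𝒞, A.eps j σ (Φ 𝒞) = φ j σ (fun i => A.eps j σ (𝒞 i)))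
    {c : ι → ℝ} (hc : A.IsCircuitRelation c) {j k : ι} (hjk : j ≠ k) (hj : c j ≠ 0)
    (hk : c k ≠ 0) (x : Fin m → ℤˣ) :
    φ k (unitSign (c k)) (-x) = -φ j (unitSign (c j)) x := by
  have key : ∀ ρ : ℤˣ,
      ¬ (φ j (unitSign (c j)) x = ρ ∧ φ k (unitSign (c k)) (-x) = ρ) := by
    rintro ρ ⟨h1, h2⟩
    let e : Fin m → ι → ℤˣ := fun a i => if i = j then x a else if i = k then -x a else ρ
    have hej : ∀ a, e a j = x a := fun a => by simp [e]
    have hek : ∀ a, e a k = -x a := fun a => by simp [e, hjk.symm]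
    have hex : ∀ a, ∃ C : A.Ch, ∀ i, c i ≠ 0 → A.eps i (unitSign (c i)) C = e a i := by
      intro a
      rcases Int.units_eq_one_or (x a) with h | h
      · exact exists_chamber_of_signs hc (e a) hj hk (by rw [hej, h]) (by rw [hek, h])
      · exact exists_chamber_of_signs hc (e a) hk hj (by rw [hek, h, neg_neg]) (by rw [hej, h])
    choose 𝒞 h𝒞 using hex
    refine eps_not_constant hc.1 hj (Φ 𝒞) ρ fun i hi => ?_
    have hrow : (fun a => A.eps i (unitSign (c i)) (𝒞 a)) = fun a => e a i :=
      funext fun a => h𝒞 a i hi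
    rw [hcomm, hrow]
    by_cases hij : i = j
    · subst hij
      simpa only [hej] using h1
    by_cases hik : i = k
    · subst hik
      simp only [hek]
      exact h2
    · have : (fun a => e a i) = fun _ => ρ := funext fun a => by simp [e, hij, hik]
      rw [this]
      exact phi_const hunit hcomm i _ ρ
  rcases Int.units_eq_one_or (φ j (unitSign (c j)) x) with h1 | h1 <;>
    rcases Int.units_eq_one_or (φ k (unitSign (c k)) (-x)) with h2 | h2
  · exact absurd ⟨h1, h2⟩ (key 1)
  · rw [h1, h2]
  · rw [h1, h2, neg_neg]
  · exact absurd ⟨h1, h2⟩ (key (-1))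

lemma phi_circuit_const (hunit : ∀ j σ, φ j σ (fun _ => 1) = 1)
    (hcomm : ∀ j σ 𝒞, A.eps j σ (Φ 𝒞) = φ j σ (fun i => A.eps j σ (𝒞 i)))
    {c : ι → ℝ} (hc : A.IsCircuitRelation c) {j k : ι} (hjk : j ≠ k) (hj : c j ≠ 0)
    (hk : c k ≠ 0) (σ τ : ℤˣ) : φ j σ = φ k τ := by
  obtain ⟨l, hl, hlj, hlk⟩ := hc.1.exists_third hjk hj hk
  have hneg := fun {a b : ι} (hab : a ≠ b) (ha : c a ≠ 0) (hb : c b ≠ 0) =>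
    phi_circuit_neg hunit hcomm hc hab ha hb
  have hjk' : φ j (unitSign (c j)) = φ k (unitSign (c k)) := by
    funext x
    rw [← neg_inj, ← hneg hlj.symm hj hl x, ← hneg hlk.symm hk hl x]
  have hodd : ∀ x, φ j (unitSign (c j)) (-x) = -φ j (unitSign (c j)) x := fun x => by
    rw [hneg hjk.symm hk hj x, hjk']
  have hsign : ∀ i ν, φ i (unitSign (c i)) = φ j (unitSign (c j)) →
      φ i ν = φ j (unitSign (c j)) := by
    intro i ν hi
    by_cases hν : ν = unitSign (c i)
    · rw [hν, hi]
    · funext x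
      rw [Int.units_ne_iff_eq_neg.1 hν, phi_neg_sign hcomm, hi, hodd, neg_neg]
  rw [hsign j σ rfl, hsign k τ hjk'.symm]

end Admissible

/-! ### Circuits from indecomposability -/

/-- The codimension of an intersection of hyperplanes is the rank of the defining forms. -/
lemma rnkOn_eq (A : Arrangement ℓ ι) (S : Finset ι) :
    A.rnkOn S = Module.finrank ℝ (Submodule.span ℝ (A.form '' (S : Set ι))) := by
  have h : (⨅ j ∈ S, LinearMap.ker (A.form j)) =
      Submodule.dualCoannihilator (Submodule.span ℝ (A.form '' (S : Set ι))) := by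
    apply SetLike.coe_injective
    rw [Submodule.coe_dualCoannihilator_span]
    ext x
    simp
  have h2 := Subspace.finrank_add_finrank_dualCoannihilator_eq
    (Submodule.span ℝ (A.form '' (S : Set ι)))
  rw [Module.finrank_fin_fun] at h2
  rw [rnkOn, h]
  exact Nat.sub_eq_of_eq_add h2.symm

/-- If `S` and its complement are nonempty, the spans of their forms meet nontrivially. -/
lemma exists_relation_crossing {A : Arrangement ℓ ι} (hA : A.Indecomposable) (S : Finset ι)
    (hS : S.Nonempty) (hSc : Sᶜ.Nonempty) :
    ∃ c, A.IsRelation c ∧ ∑ i ∈ S, c i • A.form i ≠ 0 := by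
  by_contra! h
  refine hA ⟨S, Sᶜ, hS, hSc, disjoint_compl_right, Finset.union_compl S, ?_⟩
  have hinf : Submodule.span ℝ (A.form '' (S : Set ι)) ⊓
      Submodule.span ℝ (A.form '' ((Sᶜ : Finset ι) : Set ι)) = ⊥ := by
    rw [eq_bot_iff]
    rintro v ⟨h1, h2⟩
    obtain ⟨a, ha⟩ := Submodule.mem_span_image_finset_iff_exists_fun' ℝ |>.1 h1
    obtain ⟨b, hb⟩ := Submodule.mem_span_image_finset_iff_exists_fun' ℝ |>.1 h2
    let c : ι → ℝ := fun i => if i ∈ S then a i else -b i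
    have hcS : ∑ i ∈ S, c i • A.form i = v := by
      rw [← ha]
      exact Finset.sum_congr rfl fun i hi => by simp [c, hi]
    have hcSc : ∑ i ∈ Sᶜ, c i • A.form i = -v := by
      rw [← hb, ← Finset.sum_neg_distrib]
      exact Finset.sum_congr rfl fun i hi => by
        refine LinearMap.ext fun x => ?_
        simp [c, Finset.mem_compl.1 hi]
    have hrel : A.IsRelation c := by
      rw [IsRelation, ← Finset.sum_add_sum_compl S, hcS, hcSc, add_neg_cancel]
    rw [Submodule.mem_bot, ← hcS]
    exact h c hrel
  have hsup := Submodule.finrank_sup_add_finrank_inf_eq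
    (Submodule.span ℝ (A.form '' (S : Set ι)))
    (Submodule.span ℝ (A.form '' ((Sᶜ : Finset ι) : Set ι)))
  rw [hinf, finrank_bot, add_zero, ← Submodule.span_union, ← Set.image_union,
    ← Finset.coe_union, Finset.union_compl] at hsup
  rw [rnkOn_eq, rnkOn_eq, rnkOn_eq, hsup]

/-- Some circuit meets both `S` and its complement. -/
lemma exists_circuit_crossing {A : Arrangement ℓ ι} (hA : A.Indecomposable) (S : Finset ι)
    (hS : S.Nonempty) (hSc : Sᶜ.Nonempty) :
    ∃ c, A.IsCircuitRelation c ∧ (∃ j ∈ S, c j ≠ 0) ∧ ∃ k ∉ S, c k ≠ 0 := by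
  let supp : (ι → ℝ) → Finset ι := fun c => Finset.univ.filter fun i => c i ≠ 0
  let good : Set (ι → ℝ) := {c | A.IsRelation c ∧ ∑ i ∈ S, c i • A.form i ≠ 0}
  obtain ⟨c, ⟨hrel, hcS⟩, hmin⟩ := (measure fun c => (supp c).card).wf.has_min good
    (exists_relation_crossing hA S hS hSc)
  have hjS : ∃ j ∈ S, c j ≠ 0 := by
    by_contra! h
    exact hcS (Finset.sum_eq_zero fun i hi => by rw [h i hi, zero_smul])
  have hkS : ∃ k ∉ S, c k ≠ 0 := by
    by_contra! h
    apply hcS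
    rw [← hrel]
    exact Finset.sum_subset (Finset.subset_univ _) fun i _ hi => by rw [h i hi, zero_smul]
  -- A relation with strictly smaller support than `c` splits into relations on `S` and `Sᶜ`.
  have hsmall : ∀ d, A.IsRelation d → (∀ i, c i = 0 → d i = 0) → (∃ i, c i ≠ 0 ∧ d i = 0) →
      ∑ i ∈ S, d i • A.form i = 0 := by
    rintro d hd hsub ⟨i, hci, hdi⟩
    by_contra hdS
    refine hmin d ⟨hd, hdS⟩ (Finset.card_lt_card ?_)
    refine Finset.ssubset_iff_of_subset (fun a ha => ?_) |>.2 ⟨i, by simp [supp, hci], ?_⟩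
    · simp only [supp, Finset.mem_filter, Finset.mem_univ, true_and] at ha ⊢
      exact fun h => ha (hsub a h)
    · simp [supp, hdi]
  -- A relation `d` on `supp c` that splits in this way is zero: otherwise subtracting a multiple of it from `c` would
  -- shrink the support without changing the sum over `S`.
  have hzero : ∀ d, A.IsRelation d → (∀ i, c i = 0 → d i = 0) →
      ∑ i ∈ S, d i • A.form i = 0 → d = 0 := by
    intro d hd hsub hdS
    by_contra hne
    obtain ⟨i, hi⟩ := Function.ne_iff.1 hne
    have hi' : d i ≠ 0 := hi
    apply hcS
    have h := hsmall (c - (c i / d i) • d) (hrel.sub_smul hd _)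
      (fun a ha => by simp [ha, hsub a ha]) ⟨i, fun h => hi' (hsub i h), by simp [hi']⟩
    rwa [sum_sub_smul, hdS, smul_zero, sub_zero] at h
  refine ⟨c, ⟨hrel, fun d hd hsub => ?_⟩, hjS, hkS⟩
  obtain ⟨j, -, hj⟩ := hjS
  have hsub' : ∀ a, c a = 0 → (d - (d j / c j) • c) a = 0 := fun a ha => by
    simp [ha, hsub a ha]
  exact ⟨d j / c j, sub_eq_zero.1 <| hzero _ (hd.sub_smul hrel _) hsub' <|
    hsmall _ (hd.sub_smul hrel _) hsub' ⟨j, hj, by simp [hj]⟩⟩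

end Arrangement

/-- **Lemma.** If `𝒜` is indecomposable with `|𝒜| ≥ 3` and `Φ` is admissible with associated
family `φⱼ^σ`, then the maps `φⱼ^σ` do not depend on `j` or `σ`. -/
theorem phi_independent {ℓ : ℕ} {ι : Type} [Fintype ι] (A : Arrangement ℓ ι)
    (hA : A.Indecomposable) (hcard : 3 ≤ Fintype.card ι)
    (m : ℕ) (hm : 0 < m)
    (Φ : (Fin m → A.Ch) → A.Ch)
    (φ : ι → ℤˣ → (Fin m → ℤˣ) → ℤˣ)
    (hunit : ∀ j σ, φ j σ (fun _ => 1) = 1)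
    (hcomm : ∀ j σ 𝒞, A.eps j σ (Φ 𝒞) = φ j σ (fun i => A.eps j σ (𝒞 i))) :
    ∀ (j₁ j₂ : ι) (σ₁ σ₂ : ℤˣ), φ j₁ σ₁ = φ j₂ σ₂ := by
  have hsign : ∀ j σ τ, φ j σ = φ j τ := by
    intro j σ τ
    have : Nontrivial ι := Fintype.one_lt_card_iff_nontrivial.1 (by omega)
    obtain ⟨i, hi⟩ := exists_ne j
    obtain ⟨c, hc, ⟨j', hj', hcj⟩, k, hk, hck⟩ := Arrangement.exists_circuit_crossing hA {j}
      ⟨j, by simp⟩ ⟨i, by simpa using hi⟩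
    obtain rfl : j' = j := by simpa using hj'
    have hjk : j' ≠ k := fun h => hk (by simp [h])
    rw [Arrangement.phi_circuit_const hunit hcomm hc hjk hcj hck σ 1,
      Arrangement.phi_circuit_const hunit hcomm hc hjk hcj hck τ 1]
  intro j₁ j₂ σ₁ σ₂
  rw [hsign j₁ σ₁ 1, hsign j₂ σ₂ 1]
  by_contra hne
  obtain ⟨c, hc, ⟨j, hj, hcj⟩, k, hk, hck⟩ := Arrangement.exists_circuit_crossing hA
    (Finset.univ.filter fun i => φ i 1 = φ j₁ 1) ⟨j₁, by simp⟩
    ⟨j₂, by simpa using fun h => hne h.symm⟩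
  simp only [Finset.mem_filter, Finset.mem_univ, true_and] at hj hk
  have hjk : j ≠ k := fun h => hk (h ▸ hj)
  exact hk ((Arrangement.phi_circuit_const hunit hcomm hc hjk hcj hck 1 1).symm.trans hj)
end
end
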